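/- arXiv:math/0611488 — 2 statements merged into one kernel-verified Lean document; each statement's English description precedes it below -/
import Mathlib

section
/- Let a = (a_1,...,a_n) with 2 ≤ a_1 ≤ ... ≤ a_n satisfying a_j > Σ_{i=1}^{j−1}(a_i − 1) for all j > 1. Then every homogeneous ideal I ⊆ k[x_1,...,x_n] containing a homogeneous regular sequence f_1,...,f_n with deg(f_i) = a_i has the same Hilbert function as an ideal containing x_1^{a_1},...,x_n^{a_n}. -/
open MvPolynomial

/-- Hilbert function of a homogeneous ideal `I`: the `K`-dimension of its degree-`d` piece. -/
noncomputable def hilb {K : Type} [Field K] {n : ℕ}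
    (I : Ideal (MvPolynomial (Fin n) K)) (d : ℕ) : ℕ :=
  Module.finrank K ↥(Submodule.restrictScalars K I ⊓ homogeneousSubmodule (Fin n) K d)

/-- Hilbert function of the quotient `S/I` in degree `d`. -/
noncomputable def hilbQ {K : Type} [Field K] {n : ℕ}
    (I : Ideal (MvPolynomial (Fin n) K)) (d : ℕ) : ℕ :=
  Module.finrank K
    ((homogeneousSubmodule (Fin n) K d).map (Ideal.Quotient.mkₐ K I).toLinearMap)

/-- A homogeneous ideal: closed under taking homogeneous components. -/
def IsHomog {K : Type} [Field K] {n : ℕ} (I : Ideal (MvPolynomial (Fin n) K)) : Prop :=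
  ∀ f ∈ I, ∀ d : ℕ, homogeneousComponent d f ∈ I

/-- `f 0, ..., f (r-1)` is a regular sequence: it generates a proper ideal and each `f i`
is a nonzerodivisor modulo the ideal generated by the previous elements. -/
def IsRegSeq {K : Type} [Field K] {n r : ℕ} (f : Fin r → MvPolynomial (Fin n) K) : Prop :=
  Ideal.span (Set.range f) ≠ ⊤ ∧
  ∀ i : Fin r, ∀ g : MvPolynomial (Fin n) K,
    f i * g ∈ Ideal.span (f '' {j : Fin r | j < i}) →
      g ∈ Ideal.span (f '' {j : Fin r | j < i})

/-- A monomial ideal: generated by monomials. -/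
def IsMonomialIdeal {K : Type} [Field K] {n : ℕ} (I : Ideal (MvPolynomial (Fin n) K)) : Prop :=
  ∃ T : Set (Fin n →₀ ℕ), I = Ideal.span ((fun u => monomial u (1 : K)) '' T)

/-- `x^v` is lexicographically greater than `x^u` (for `x_0 > x_1 > ... > x_{n-1}`). -/
def lexGT {n : ℕ} (v u : Fin n →₀ ℕ) : Prop :=
  ∃ i : Fin n, u i < v i ∧ ∀ j : Fin n, j < i → v j = u j
/-- `EGHnr K n r h a`: every homogeneous ideal of `K[x_1,...,x_n]` containing a homogeneous
regular sequence of length `r` and degrees `a 0, ..., a (r-1)` has the same Hilbert function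
as some ideal containing the pure powers `x_i^{a i}` for `1 ≤ i ≤ r`. -/
def EGHnr (K : Type) [Field K] (n r : ℕ) (h : r ≤ n) (a : Fin r → ℕ) : Prop :=
  ∀ I : Ideal (MvPolynomial (Fin n) K), IsHomog I →
    (∃ f : Fin r → MvPolynomial (Fin n) K,
      IsRegSeq f ∧ (∀ i, (f i).IsHomogeneous (a i)) ∧ ∀ i, f i ∈ I) →
    ∃ J : Ideal (MvPolynomial (Fin n) K),
      (∀ i : Fin r, (X (Fin.castLE h i) : MvPolynomial (Fin n) K) ^ a i ∈ J) ∧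
      ∀ d : ℕ, hilb I d = hilb J d


open MvPolynomial

namespace EGH

/-- strict lexicographic order -/
def lx {n : ℕ} (u v : Fin n → ℕ) : Prop := ∃ i, (∀ j, j < i → u j = v j) ∧ u i < v i

theorem lx_iff {n : ℕ} (u v : Fin n → ℕ) : lx u v ↔ toLex u < toLex v := Iff.rfl

theorem lx_trans {n : ℕ} {u v w : Fin n → ℕ} (h : lx u v) (h' : lx v w) : lx u w := by
  rw [lx_iff] at *; exact h.trans h'

theorem lx_irrefl {n : ℕ} (u : Fin n → ℕ) : ¬ lx u u := by
  rw [lx_iff]; exact lt_irrefl _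

theorem lx_tri {n : ℕ} (u v : Fin n → ℕ) : lx u v ∨ u = v ∨ lx v u := by
  rw [lx_iff, lx_iff]
  rcases lt_trichotomy (toLex u) (toLex v) with h | h | h
  · exact Or.inl h
  · exact Or.inr (Or.inl (toLex.injective h))
  · exact Or.inr (Or.inr h)

/-- monomials of degree d in the box -/
def level {n : ℕ} (a : Fin n → ℕ) (d : ℕ) : Finset (Fin n → ℕ) :=
  (Fintype.piFinset fun i => Finset.range (a i)).filter fun u => ∑ i, u i = d

theorem mem_level {n : ℕ} {a : Fin n → ℕ} {d : ℕ} {u : Fin n → ℕ} :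
    u ∈ level a d ↔ (∀ i, u i < a i) ∧ ∑ i, u i = d := by
  simp [level]

open Classical in
/-- upper shadow in the box -/
noncomputable def shad {n : ℕ} (a : Fin n → ℕ) (A : Finset (Fin n → ℕ)) : Finset (Fin n → ℕ) :=
  (Fintype.piFinset fun i => Finset.range (a i)).filter
    fun v => ∃ u ∈ A, ∃ i, v = u + Pi.single i 1

theorem mem_shad {n : ℕ} {a : Fin n → ℕ} {A : Finset (Fin n → ℕ)} {v : Fin n → ℕ} :
    v ∈ shad a A ↔ (∀ i, v i < a i) ∧ ∃ u ∈ A, ∃ i, v = u + Pi.single i 1 := by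
  simp [shad]

theorem sum_single {n : ℕ} (u : Fin n → ℕ) (i : Fin n) :
    ∑ j, (u + Pi.single i 1 : Fin n → ℕ) j = ∑ j, u j + 1 := by
  simp [Finset.sum_add_distrib]

theorem shad_mono {n : ℕ} {a : Fin n → ℕ} {A B : Finset (Fin n → ℕ)} (h : A ⊆ B) :
    shad a A ⊆ shad a B := by
  intro v hv
  rw [mem_shad] at *
  obtain ⟨h1, u, hu, i, hi⟩ := hv
  exact ⟨h1, u, h hu, i, hi⟩

theorem shad_subset_level {n : ℕ} {a : Fin n → ℕ} {d : ℕ} {A : Finset (Fin n → ℕ)}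
    (hA : A ⊆ level a d) : shad a A ⊆ level a (d + 1) := by
  intro v hv
  rw [mem_shad] at hv
  obtain ⟨h1, u, hu, i, rfl⟩ := hv
  rw [mem_level]
  refine ⟨h1, ?_⟩
  rw [sum_single, (mem_level.1 (hA hu)).2]

theorem exists_move {n : ℕ} {a : Fin n → ℕ} {d : ℕ} {u : Fin n → ℕ} (hu : u ∈ level a d)
    {i j : Fin n} (hij : i ≠ j) (hi : u i + 1 < a i) (hj : 0 < u j) :
    ∃ w ∈ level a d, w + Pi.single j 1 = u + Pi.single i 1 ∧ w i = u i + 1 ∧ w j + 1 = u j ∧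
      ∀ k, k ≠ i → k ≠ j → w k = u k := by
  have key : (fun k => if k = i then u i + 1 else if k = j then u j - 1 else u k) + Pi.single j 1
      = u + Pi.single i 1 := by
    funext k
    by_cases hk : k = i
    · subst hk; simp [hij]
    · by_cases hk' : k = j
      · subst hk'; simp [hk]; omega
      · simp [hk, hk']
  refine ⟨_, ?_, key, by simp, ?_, ?_⟩
  · rw [mem_level] at *
    refine ⟨fun k => ?_, ?_⟩
    · have := hu.1 k
      split_ifs with h1 h2
      · subst h1; exact hi
      · subst h2; omega
      · exact this
    · have h1 := congrArg (fun f => ∑ k, f k) key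
      simp only [sum_single] at h1
      omega
  · simp [hij.symm]; omega
  · intro k h1 h2; simp [h1, h2]

/-- initial lex segment (from the largest) -/
def Init {n : ℕ} (a : Fin n → ℕ) (d : ℕ) (L : Finset (Fin n → ℕ)) : Prop :=
  L ⊆ level a d ∧ ∀ u ∈ L, ∀ v ∈ level a d, lx u v → v ∈ L

theorem Init.subset_of_card {n : ℕ} {a : Fin n → ℕ} {d : ℕ} {L M : Finset (Fin n → ℕ)}
    (hL : Init a d L) (hM : Init a d M) (h : L.card ≤ M.card) : L ⊆ M := by
  by_contra hc
  obtain ⟨u, huL, huM⟩ := Finset.not_subset.1 hc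
  have : M ⊆ L := by
    intro v hv
    rcases lx_tri u v with h1 | h1 | h1
    · exact hL.2 u huL v (hM.1 hv) h1
    · exact h1 ▸ huL
    · exact absurd (hM.2 v hv u (hL.1 huL) h1) huM
  have := Finset.eq_of_subset_of_card_le this h
  exact huM (this ▸ huL)

theorem exists_init {n : ℕ} (a : Fin n → ℕ) (d : ℕ) (c : ℕ) (hc : c ≤ (level a d).card) :
    ∃ L, Init a d L ∧ L.card = c := by
  classical
  induction c with
  | zero => exact ⟨∅, ⟨by simp, by simp⟩, rfl⟩
  | succ c ih =>
    obtain ⟨L, hL, hLc⟩ := ih (by omega)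
    have hne : (level a d \ L).Nonempty := by
      rw [← Finset.card_pos]
      have := Finset.le_card_sdiff L (level a d)
      omega
    obtain ⟨m, hm, hmax⟩ := Finset.exists_max_image (level a d \ L) (fun u => toLex u) hne
    rw [Finset.mem_sdiff] at hm
    refine ⟨insert m L, ⟨?_, ?_⟩, ?_⟩
    · intro u hu
      rcases Finset.mem_insert.1 hu with rfl | h
      · exact hm.1
      · exact hL.1 h
    · intro u hu v hv huv
      rw [Finset.mem_insert] at hu ⊢
      by_contra hcon
      push Not at hcon
      rcases hu with rfl | hu
      · have := hmax v (Finset.mem_sdiff.2 ⟨hv, hcon.2⟩)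
        exact absurd ((lx_iff _ _).1 huv) (not_lt.2 this)
      · exact hcon.2 (hL.2 u hu v hv huv)
    · rw [Finset.card_insert_of_notMem hm.2, hLc]

theorem Init.shad {n : ℕ} {a : Fin n → ℕ} {d : ℕ} {L : Finset (Fin n → ℕ)}
    (hL : Init a d L) : Init a (d + 1) (shad a L) := by
  refine ⟨shad_subset_level hL.1, ?_⟩
  intro v hv w hw hvw
  rw [mem_shad] at hv ⊢
  obtain ⟨hvb, u, hu, i, rfl⟩ := hv
  rw [mem_level] at hw
  refine ⟨hw.1, ?_⟩
  obtain ⟨p, hp1, hp2⟩ := hvw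
  -- last element of the support of w
  have hwp : 0 < w p := by omega
  obtain ⟨k, hk, hkmax⟩ := Finset.exists_max_image (Finset.univ.filter fun k => 0 < w k) id
    ⟨p, by simp [hwp]⟩
  simp only [Finset.mem_filter, Finset.mem_univ, true_and, id] at hk hkmax
  have hpk : p ≤ k := hkmax p hwp
  obtain ⟨w', rfl⟩ : ∃ w' : Fin n → ℕ, w = w' + Pi.single k 1 := by
    refine ⟨fun j => if j = k then w k - 1 else w j, ?_⟩
    funext j
    show w j = (if j = k then w k - 1 else w j) + (Pi.single k 1 : Fin n → ℕ) j
    by_cases h : j = k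
    · subst h; simp; omega
    · simp [h]
  refine ⟨w', ?_, k, rfl⟩
  have hw' : w' ∈ level a d := by
    rw [mem_level]
    refine ⟨fun j => lt_of_le_of_lt ?_ (hw.1 j), ?_⟩
    · simp
    · have := hw.2; rw [sum_single] at this; omega
  have hul := mem_level.1 (hL.1 hu)
  have hw'l := mem_level.1 hw'
  have : u = w' ∨ lx u w' := by
    rcases lx_tri u w' with h | h | h
    · exact Or.inr h
    · exact Or.inl h
    · exfalso
      obtain ⟨q, hq1, hq2⟩ := h
      have hq1' : ∀ j, j < q → w' j = u j := hq1
      -- q < p impossible, etc.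
      have e1 : ∀ j, j < p → u j + (Pi.single i 1 : Fin n → ℕ) j = w' j + (Pi.single k 1 : Fin n → ℕ) j := hp1
      have e2 : u p + (Pi.single i 1 : Fin n → ℕ) p < w' p + (Pi.single k 1 : Fin n → ℕ) p := hp2
      have e3 : ∀ j, j < k → (Pi.single k 1 : Fin n → ℕ) j = 0 := fun j hj => by simp [hj.ne]
      have e4 : (Pi.single k 1 : Fin n → ℕ) k = 1 := by simp
      have e5 : ∀ j, k < j → w' j = 0 := by
        intro j hj
        by_contra hne
        have := hkmax j (by simp; omega)
        omega
      rcases lt_trichotomy q p with h | h | h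
      · have := e1 q h
        have := e3 q (by omega)
        omega
      · subst h
        rcases hpk.lt_or_eq with h' | h'
        · have := e3 q h'
          omega
        · subst h'; omega
      · rcases hpk.lt_or_eq with h' | h'
        · have := e3 p h'
          have := hq1 p h
          omega
        · subst h'
          have hsum : ∑ j, w' j < ∑ j, u j := by
            apply Finset.sum_lt_sum
            · intro j _
              rcases lt_trichotomy j p with h1 | h1 | h1
              · exact (hq1 j (by omega)).le
              · subst h1; exact (hq1 j (by omega)).le
              · rw [e5 j h1]; omega
            · exact ⟨q, Finset.mem_univ _, hq2⟩
          omega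
  rcases this with h | h
  · exact h ▸ hu
  · exact hL.2 u hu w' hw' h

/-! slices -/

theorem lx_removeNth {n : ℕ} (i : Fin (n + 1)) (u v : Fin (n + 1) → ℕ) (h : u i = v i) :
    lx u v ↔ lx (i.removeNth u) (i.removeNth v) := by
  constructor
  · rintro ⟨p, hp1, hp2⟩
    have hpi : p ≠ i := by rintro rfl; omega
    obtain ⟨q, rfl⟩ := Fin.exists_succAbove_eq hpi
    exact ⟨q, fun j hj => hp1 _ (Fin.succAbove_lt_succAbove_iff.2 hj), hp2⟩
  · rintro ⟨q, hq1, hq2⟩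
    refine ⟨i.succAbove q, fun j hj => ?_, hq2⟩
    by_cases hji : j = i
    · rw [hji, h]
    · obtain ⟨r, rfl⟩ := Fin.exists_succAbove_eq hji
      exact hq1 r (Fin.succAbove_lt_succAbove_iff.1 hj)

open Classical in
noncomputable def sl {n : ℕ} (i : Fin (n + 1)) (j : ℕ) (A : Finset (Fin (n + 1) → ℕ)) :
    Finset (Fin n → ℕ) := (A.filter fun u => u i = j).image i.removeNth

theorem mem_sl {n : ℕ} {i : Fin (n + 1)} {j : ℕ} {A : Finset (Fin (n + 1) → ℕ)} {w : Fin n → ℕ} :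
    w ∈ sl i j A ↔ (i.insertNth j w : Fin (n + 1) → ℕ) ∈ A := by
  simp only [sl, Finset.mem_image, Finset.mem_filter]
  constructor
  · rintro ⟨u, ⟨hu, rfl⟩, rfl⟩
    rw [Fin.insertNth_self_removeNth]; exact hu
  · intro h
    exact ⟨_, ⟨h, by simp⟩, by simp⟩

theorem card_sl {n : ℕ} (i : Fin (n + 1)) (j : ℕ) (A : Finset (Fin (n + 1) → ℕ)) :
    (sl i j A).card = (A.filter fun u => u i = j).card := by
  classical
  unfold sl
  rw [Finset.card_image_of_injOn]
  · intro u hu v hv h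
    simp only [Finset.coe_filter, Set.mem_ofPred_eq] at hu hv
    rw [← Fin.insertNth_self_removeNth i u, ← Fin.insertNth_self_removeNth i v, h, hu.2, hv.2]

theorem card_eq_sum_sl {n : ℕ} (i : Fin (n + 1)) (A : Finset (Fin (n + 1) → ℕ)) (m : ℕ)
    (h : ∀ u ∈ A, u i < m) : A.card = ∑ j ∈ Finset.range m, (sl i j A).card := by
  simp only [card_sl]
  exact Finset.card_eq_sum_card_fiberwise (fun u hu => by simpa using h u hu)

theorem insertNth_mem_level {n : ℕ} {a : Fin (n + 1) → ℕ} {d : ℕ} {i : Fin (n + 1)} {j : ℕ}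
    {w : Fin n → ℕ} : (i.insertNth j w : Fin (n + 1) → ℕ) ∈ level a d ↔
      j < a i ∧ j ≤ d ∧ w ∈ level (i.removeNth a) (d - j) := by
  rw [mem_level, mem_level, Fin.forall_iff_succAbove i, Fin.sum_univ_succAbove _ i]
  simp only [Fin.insertNth_apply_same, Fin.insertNth_apply_succAbove, Fin.removeNth]
  constructor
  · rintro ⟨⟨h1, h2⟩, h3⟩
    exact ⟨h1, by omega, h2, by omega⟩
  · rintro ⟨h1, h2, h3, h4⟩
    exact ⟨⟨h1, h3⟩, by omega⟩

theorem insertNth_add_single_self {n : ℕ} (i : Fin (n + 1)) (j : ℕ) (w : Fin n → ℕ) :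
    (i.insertNth j w : Fin (n + 1) → ℕ) + Pi.single i 1 = i.insertNth (j + 1) w := by
  funext k
  by_cases hk : k = i
  · subst hk; simp
  · obtain ⟨r, rfl⟩ := Fin.exists_succAbove_eq hk
    simp

theorem insertNth_add_single_succAbove {n : ℕ} (i : Fin (n + 1)) (j : ℕ) (w : Fin n → ℕ)
    (p : Fin n) :
    (i.insertNth j w : Fin (n + 1) → ℕ) + Pi.single (i.succAbove p) 1
      = i.insertNth j (w + Pi.single p 1) := by
  funext k
  by_cases hk : k = i
  · subst hk; simp
  · obtain ⟨r, rfl⟩ := Fin.exists_succAbove_eq hk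
    simp [Pi.single_apply]

theorem mem_sl_shad {n : ℕ} {a : Fin (n + 1) → ℕ} {i : Fin (n + 1)} {j : ℕ}
    {A : Finset (Fin (n + 1) → ℕ)} {w : Fin n → ℕ} :
    w ∈ sl i j (shad a A) ↔ j < a i ∧ (∀ k, w k < a (i.succAbove k)) ∧
      (w ∈ shad (i.removeNth a) (sl i j A) ∨ ∃ j', j = j' + 1 ∧ w ∈ sl i j' A) := by
  rw [mem_sl, mem_shad, Fin.forall_iff_succAbove i]
  simp only [Fin.insertNth_apply_same, Fin.insertNth_apply_succAbove]
  rw [and_assoc]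
  refine and_congr_right fun h1 => and_congr_right fun h2 => ?_
  constructor
  · rintro ⟨u, hu, k, hk⟩
    by_cases hki : k = i
    · subst hki
      right
      refine ⟨u k, ?_, ?_⟩
      · have := congrFun hk k
        simpa using this
      · rw [mem_sl]
        convert hu
        rw [← Fin.insertNth_self_removeNth k u, insertNth_add_single_self] at hk
        have h3 := congrArg k.removeNth hk
        simp only [Fin.removeNth_insertNth] at h3
        rw [h3, Fin.insertNth_self_removeNth]
    · obtain ⟨r, rfl⟩ := Fin.exists_succAbove_eq hki
      left
      rw [mem_shad]
      refine ⟨h2, i.removeNth u, ?_, r, ?_⟩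
      · rw [mem_sl]
        have : j = u i := by
          have := congrFun hk i
          simpa using this
        rw [this, Fin.insertNth_self_removeNth]; exact hu
      · rw [← Fin.insertNth_self_removeNth i u, insertNth_add_single_succAbove] at hk
        have h3 := congrArg i.removeNth hk
        simpa only [Fin.removeNth_insertNth] using h3
  · rintro (h | ⟨j', rfl, h⟩)
    · rw [mem_shad] at h
      obtain ⟨-, u, hu, k, rfl⟩ := h
      rw [mem_sl] at hu
      exact ⟨_, hu, _, (insertNth_add_single_succAbove i j u k).symm⟩
    · rw [mem_sl] at h
      exact ⟨_, h, _, (insertNth_add_single_self i j' w).symm⟩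

open Classical in
noncomputable def stack {n : ℕ} (a : Fin (n + 1) → ℕ) (d : ℕ) (i : Fin (n + 1))
    (Lf : ℕ → Finset (Fin n → ℕ)) : Finset (Fin (n + 1) → ℕ) :=
  (level a d).filter fun u => i.removeNth u ∈ Lf (u i)

theorem sl_stack {n : ℕ} {a : Fin (n + 1) → ℕ} {d : ℕ} {i : Fin (n + 1)}
    {Lf : ℕ → Finset (Fin n → ℕ)}
    (h : ∀ j, ∀ w ∈ Lf j, j < a i ∧ j ≤ d ∧ w ∈ level (i.removeNth a) (d - j)) (j : ℕ) :
    sl i j (stack a d i Lf) = Lf j := by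
  ext w
  rw [mem_sl, stack, Finset.mem_filter, insertNth_mem_level]
  simp only [Fin.insertNth_apply_same, Fin.removeNth_insertNth]
  exact ⟨fun h => h.2, fun hw => ⟨h j w hw, hw⟩⟩

theorem card_stack {n : ℕ} {a : Fin (n + 1) → ℕ} {d : ℕ} {i : Fin (n + 1)}
    {Lf : ℕ → Finset (Fin n → ℕ)}
    (h : ∀ j, ∀ w ∈ Lf j, j < a i ∧ j ≤ d ∧ w ∈ level (i.removeNth a) (d - j)) :
    (stack a d i Lf).card = ∑ j ∈ Finset.range (a i), (Lf j).card := by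
  rw [card_eq_sum_sl i _ (a i)]
  · simp only [sl_stack h]
  · intro u hu
    exact (mem_level.1 (Finset.mem_filter.1 hu).1).1 i

theorem card_shad_stack_le {n : ℕ} {a : Fin (n + 1) → ℕ} {d : ℕ} {i : Fin (n + 1)}
    {Lf V : ℕ → Finset (Fin n → ℕ)}
    (h : ∀ j, ∀ w ∈ Lf j, j < a i ∧ j ≤ d ∧ w ∈ level (i.removeNth a) (d - j))
    (h1 : ∀ j, j < a i → shad (i.removeNth a) (Lf j) ⊆ V j)
    (h2 : ∀ j, j + 1 < a i → Lf j ⊆ V (j + 1)) :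
    (shad a (stack a d i Lf)).card ≤ ∑ j ∈ Finset.range (a i), (V j).card := by
  rw [card_eq_sum_sl i _ (a i)]
  · apply Finset.sum_le_sum
    intro j hj
    apply Finset.card_le_card
    intro w hw
    rw [mem_sl_shad] at hw
    obtain ⟨hj, -, hw | ⟨j', rfl, hw⟩⟩ := hw
    · rw [sl_stack h] at hw
      exact h1 j hj hw
    · rw [sl_stack h] at hw
      exact h2 j' hj hw
  · intro u hu
    exact (mem_shad.1 hu).1 i

end EGH
open MvPolynomial
namespace EGH

open Classical in
/-- rank of a monomial from the top of its level -/
noncomputable def rk {n : ℕ} (a : Fin n → ℕ) (d : ℕ) (u : Fin n → ℕ) : ℕ :=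
  ((level a d).filter fun v => lx u v).card

theorem rk_lt {n : ℕ} {a : Fin n → ℕ} {d : ℕ} {u v : Fin n → ℕ} (hv : v ∈ level a d)
    (h : lx u v) : rk a d v < rk a d u := by
  classical
  apply Finset.card_lt_card
  rw [Finset.ssubset_iff_of_subset]
  · exact ⟨v, by simp [hv, h], by simp [lx_irrefl]⟩
  · intro w hw
    rw [Finset.mem_filter] at *
    exact ⟨hw.1, lx_trans h hw.2⟩

theorem sum_lt_of_dom {α : Type*} [DecidableEq α] (D B : Finset α) (r : α → ℕ)
    (hc : D.card = B.card) (h : ∀ x ∈ D, ∀ y ∈ B, y ∉ D → r x < r y) (hne : D ≠ B) :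
    ∑ x ∈ D, r x < ∑ x ∈ B, r x := by
  have h1 : (D \ B).card = (B \ D).card := Finset.card_sdiff_comm hc
  have hne' : (D \ B).Nonempty := by
    rw [Finset.sdiff_nonempty]
    intro hs
    exact hne (Finset.eq_of_subset_of_card_le hs hc.ge)
  obtain ⟨x0, hx0, hmax⟩ := Finset.exists_max_image (D \ B) r hne'
  have e1 : ∑ x ∈ D, r x = ∑ x ∈ D ∩ B, r x + ∑ x ∈ D \ B, r x :=
    (Finset.sum_inter_add_sum_sdiff D B r).symm
  have e2 : ∑ x ∈ B, r x = ∑ x ∈ B ∩ D, r x + ∑ x ∈ B \ D, r x :=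
    (Finset.sum_inter_add_sum_sdiff B D r).symm
  rw [e1, e2, Finset.inter_comm B D]
  have h2 : ∑ x ∈ D \ B, r x ≤ (D \ B).card * r x0 := by
    rw [← smul_eq_mul]; exact Finset.sum_le_card_nsmul _ _ _ hmax
  have h3 : (B \ D).card * (r x0 + 1) ≤ ∑ x ∈ B \ D, r x := by
    rw [← smul_eq_mul]
    apply Finset.card_nsmul_le_sum
    intro y hy
    rw [Finset.mem_sdiff] at hy hx0
    exact h x0 hx0.1 y hy.1 hy.2
  have h4 := Finset.card_pos.2 hne'
  rw [← h1] at h3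
  nlinarith

/-- Clements–Lindström inequality in a box -/
def CL {n : ℕ} (a : Fin n → ℕ) : Prop :=
  ∀ d : ℕ, ∀ A L : Finset (Fin n → ℕ), A ⊆ level a d → Init a d L → L.card = A.card →
    (shad a L).card ≤ (shad a A).card

/-- compressed in direction i -/
def Comp {n : ℕ} (a : Fin n → ℕ) (d : ℕ) (i : Fin n) (A : Finset (Fin n → ℕ)) : Prop :=
  ∀ u ∈ A, ∀ v ∈ level a d, u i = v i → lx u v → v ∈ A

theorem compress {n : ℕ} {a : Fin (n + 1) → ℕ} {d : ℕ} (i : Fin (n + 1))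
    (hCL : CL (i.removeNth a)) {A : Finset (Fin (n + 1) → ℕ)} (hA : A ⊆ level a d)
    (hnc : ¬ Comp a d i A) :
    ∃ C, C ⊆ level a d ∧ C.card = A.card ∧ (shad a C).card ≤ (shad a A).card ∧
      ∑ u ∈ C, rk a d u < ∑ u ∈ A, rk a d u := by
  classical
  have hsl : ∀ j, ∀ w ∈ sl i j A, j < a i ∧ j ≤ d ∧ w ∈ level (i.removeNth a) (d - j) := by
    intro j w hw
    exact insertNth_mem_level.1 (hA (mem_sl.1 hw))
  have hslsub : ∀ j, sl i j A ⊆ level (i.removeNth a) (d - j) := fun j w hw => (hsl j w hw).2.2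
  have hslsub' : ∀ j, sl i j (shad a A) ⊆ level (i.removeNth a) (d + 1 - j) := by
    intro j w hw
    exact (insertNth_mem_level.1 (shad_subset_level hA (mem_sl.1 hw))).2.2
  choose Lf hLf hLfc using fun j => exists_init (i.removeNth a) (d - j) (sl i j A).card
    (Finset.card_le_card (hslsub j))
  choose V hV hVc using fun j => exists_init (i.removeNth a) (d + 1 - j) (sl i j (shad a A)).card
    (Finset.card_le_card (hslsub' j))
  have hne : ∀ j, ∀ w ∈ Lf j, j < a i ∧ j ≤ d := by
    intro j w hw
    have : 0 < (sl i j A).card := by rw [← hLfc]; exact Finset.card_pos.2 ⟨w, hw⟩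
    obtain ⟨w', hw'⟩ := Finset.card_pos.1 this
    exact ⟨(hsl j w' hw').1, (hsl j w' hw').2.1⟩
  have hst : ∀ j, ∀ w ∈ Lf j, j < a i ∧ j ≤ d ∧ w ∈ level (i.removeNth a) (d - j) :=
    fun j w hw => ⟨(hne j w hw).1, (hne j w hw).2, (hLf j).1 hw⟩
  have hcardeq : ∀ j, ((stack a d i Lf).filter fun u => u i = j).card
      = (A.filter fun u => u i = j).card := by
    intro j
    rw [← card_sl, ← card_sl, sl_stack hst, hLfc]
  have hCsub : stack a d i Lf ⊆ level a d := Finset.filter_subset _ _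
  have hAlt : ∀ u ∈ A, u i < a i := fun u hu => (mem_level.1 (hA hu)).1 i
  have hClt : ∀ u ∈ stack a d i Lf, u i < a i := fun u hu => (mem_level.1 (hCsub hu)).1 i
  have hdom : ∀ j, ∀ x ∈ (stack a d i Lf).filter (fun u => u i = j),
      ∀ y ∈ A.filter (fun u => u i = j), y ∉ (stack a d i Lf).filter (fun u => u i = j) →
      rk a d x < rk a d y := by
    intro j x hx y hy hyn
    rw [Finset.mem_filter] at hx hy hyn
    have hyC : y ∉ stack a d i Lf := fun h => hyn ⟨h, hy.2⟩
    have hx' := Finset.mem_filter.1 hx.1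
    apply rk_lt (hCsub hx.1)
    rcases lx_tri y x with h | h | h
    · exact h
    · exact absurd (h ▸ hx.1) hyC
    · exfalso
      apply hyC
      refine Finset.mem_filter.2 ⟨hA hy.1, ?_⟩
      have hyl := hA hy.1
      rw [← Fin.insertNth_self_removeNth i y, insertNth_mem_level] at hyl
      rw [lx_removeNth i _ _ (hx.2.trans hy.2.symm)] at h
      rw [hy.2] at hyl ⊢
      rw [hx.2] at hx'
      exact (hLf j).2 _ hx'.2 _ hyl.2.2 h
  refine ⟨stack a d i Lf, hCsub, ?_, ?_, ?_⟩
  · rw [card_stack hst, card_eq_sum_sl i A (a i) hAlt]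
    simp only [hLfc]
  · rw [card_eq_sum_sl i (shad a A) (a i) (fun u hu => (mem_shad.1 hu).1 i)]
    simp only [← hVc]
    apply card_shad_stack_le hst
    · intro j hj
      by_cases hjd : j ≤ d
      · apply Init.subset_of_card (d := d + 1 - j) _ (hV j)
        · rw [hVc]
          refine (hCL (d - j) (sl i j A) (Lf j) (hslsub j) (hLf j) (hLfc j)).trans ?_
          apply Finset.card_le_card
          intro w hw
          rw [mem_sl_shad]
          exact ⟨hj, (mem_shad.1 hw).1, Or.inl hw⟩
        · have := (hLf j).shad
          rwa [show d - j + 1 = d + 1 - j by omega] at this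
      · intro w hw
        obtain ⟨-, u, hu, -⟩ := mem_shad.1 hw
        exact absurd (hne j u hu).2 hjd
    · intro j hj
      have e : d + 1 - (j + 1) = d - j := by omega
      apply Init.subset_of_card (hLf j)
      · have := hV (j + 1)
        rwa [e] at this
      · rw [hVc, hLfc]
        apply Finset.card_le_card
        intro w hw
        rw [mem_sl_shad]
        exact ⟨hj, (mem_level.1 (hslsub j hw)).1, Or.inr ⟨j, rfl, hw⟩⟩
  · rw [← Finset.sum_fiberwise_of_maps_to (t := Finset.range (a i)) (g := fun u => u i)
        (fun u hu => Finset.mem_range.2 (hClt u hu)),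
      ← Finset.sum_fiberwise_of_maps_to (s := A) (t := Finset.range (a i)) (g := fun u => u i)
        (fun u hu => Finset.mem_range.2 (hAlt u hu))]
    apply Finset.sum_lt_sum
    · intro j _
      by_cases hEq : (stack a d i Lf).filter (fun u => u i = j) = A.filter (fun u => u i = j)
      · rw [hEq]
      · exact (sum_lt_of_dom _ _ _ (hcardeq j) (hdom j) hEq).le
    · by_contra hcon
      push Not at hcon
      apply hnc
      have hEq : ∀ j ∈ Finset.range (a i),
          (stack a d i Lf).filter (fun u => u i = j) = A.filter (fun u => u i = j) := by
        intro j hj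
        by_contra hne'
        exact absurd (sum_lt_of_dom _ _ _ (hcardeq j) (hdom j) hne') (not_lt.2 (hcon j hj))
      have hAC : ∀ u, u ∈ level a d → (u ∈ stack a d i Lf ↔ u ∈ A) := by
        intro u hu
        have h1 := hEq (u i) (Finset.mem_range.2 ((mem_level.1 hu).1 i))
        have h2 := Finset.ext_iff.1 h1 u
        simpa using h2
      intro u hu v hv huv hlx
      have hu' := (hAC u (hA hu)).2 hu
      have hu'' := (Finset.mem_filter.1 hu').2
      refine (hAC v hv).1 (Finset.mem_filter.2 ⟨hv, ?_⟩)
      rw [lx_removeNth i _ _ huv] at hlx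
      have hvl := hv
      rw [← Fin.insertNth_self_removeNth i v, insertNth_mem_level] at hvl
      rw [huv] at hu''
      exact (hLf _).2 _ hu'' _ hvl.2.2 hlx

theorem swap_key {m : ℕ} {a : Fin (m + 3) → ℕ} (hmono : Monotone a) {d : ℕ}
    {A : Finset (Fin (m + 3) → ℕ)} (hA : A ⊆ level a d) (hcomp : ∀ i, Comp a d i A)
    {x y : Fin (m + 3) → ℕ} (hx : x ∈ A) (hy : y ∈ level a d) (hyA : y ∉ A) (h0 : x 0 < y 0) :
    x (Fin.last _) < y (Fin.last _) := by
  have hl0 : (Fin.last (m + 2)) ≠ 0 := by simp [Fin.ext_iff]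
  have main : ∀ k : ℕ, ∀ x y : Fin (m + 3) → ℕ, x ∈ A → y ∈ level a d → y ∉ A → x 0 < y 0 →
      x (Fin.last _) ≠ y (Fin.last _) + k := by
    intro k
    induction k with
    | zero =>
      intro x y hx hy hyA h0 hk
      exact hyA (hcomp _ x hx y hy hk ⟨0, fun j hj => absurd hj (by simp), h0⟩)
    | succ k ih =>
      intro x y hx hy hyA h0 hk
      have hxl := mem_level.1 (hA hx)
      have hyl := mem_level.1 hy
      by_cases h1 : ∃ i, i ≠ 0 ∧ i ≠ Fin.last _ ∧ x i + 1 < a i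
      · obtain ⟨i, hi0, hil, hi⟩ := h1
        obtain ⟨w, hw, -, hwi, hwl, hwk⟩ := exists_move (hA hx) hil hi (by omega)
        have hwA : w ∈ A := by
          refine hcomp 0 x hx w hw (hwk 0 hi0.symm hl0.symm).symm ⟨i, fun j hj => ?_, by omega⟩
          refine (hwk j hj.ne ?_).symm
          intro hjl
          rw [hjl] at hj
          exact absurd (Fin.le_last i) (not_le.2 hj)
        refine ih w y hwA hy hyA ?_ (by omega)
        rw [hwk 0 hi0.symm hl0.symm]; exact h0
      by_cases h2 : ∃ i, i ≠ 0 ∧ i ≠ Fin.last _ ∧ 0 < y i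
      · obtain ⟨i, hi0, hil, hi⟩ := h2
        obtain ⟨w, hw, -, hwl, hwi, hwk⟩ := exists_move hy hil.symm
          (by have := hxl.1 (Fin.last _); omega) hi
        have hwA : w ∉ A := by
          intro hwA
          apply hyA
          refine hcomp 0 w hwA y hy (hwk 0 hl0.symm hi0.symm) ⟨i, fun j hj => ?_, by omega⟩
          refine hwk j ?_ hj.ne
          intro hjl
          rw [hjl] at hj
          exact absurd (Fin.le_last i) (not_le.2 hj)
        refine ih x w hx hw hwA ?_ (by omega)
        rw [hwk 0 hl0.symm hi0.symm]; exact h0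
      push Not at h1 h2
      have hone0 : (1 : Fin (m + 3)) ≠ 0 := by simp
      have honel : (1 : Fin (m + 3)) ≠ Fin.last _ := by simp [Fin.ext_iff]
      have hx1 := h1 1 hone0 honel
      have ha01 : a 0 ≤ a 1 := hmono (Fin.zero_le _)
      have hy0 := hyl.1 0
      have hys : ∑ i, y i = y 0 + y (Fin.last _) := by
        rw [← Finset.sum_pair hl0.symm]
        symm
        apply Finset.sum_subset (Finset.subset_univ _)
        intro i _ hi
        simp only [Finset.mem_insert, Finset.mem_singleton, not_or] at hi
        have := h2 i hi.1 hi.2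
        omega
      have hxs : x 1 + x (Fin.last _) ≤ ∑ i, x i := by
        rw [← Finset.sum_pair honel]
        exact Finset.sum_le_sum_of_subset (Finset.subset_univ _)
      have := hxl.2
      have := hyl.2
      omega
  by_contra hcon
  obtain ⟨k, hk⟩ := Nat.exists_eq_add_of_le (not_lt.1 hcon)
  exact main k x y hx hy hyA h0 hk

theorem swap_step {m : ℕ} {a : Fin (m + 3) → ℕ} (hmono : Monotone a) {d : ℕ}
    {A : Finset (Fin (m + 3) → ℕ)} (hA : A ⊆ level a d) (hcomp : ∀ i, Comp a d i A)
    (hni : ¬ Init a d A) :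
    ∃ C, C ⊆ level a d ∧ C.card = A.card ∧ (shad a C).card ≤ (shad a A).card ∧
      ∑ u ∈ C, rk a d u < ∑ u ∈ A, rk a d u := by
  classical
  have hni' : ∃ u ∈ A, ∃ v ∈ level a d, lx u v ∧ v ∉ A := by
    by_contra hcon
    push Not at hcon
    exact hni ⟨hA, hcon⟩
  obtain ⟨u, hu, v, hv, huv, hvA⟩ := hni'
  obtain ⟨x, hx, hxmin⟩ := Finset.exists_min_image A (fun u => toLex u) ⟨u, hu⟩
  obtain ⟨y, hy, hymax⟩ := Finset.exists_max_image (level a d \ A) (fun u => toLex u)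
    ⟨v, Finset.mem_sdiff.2 ⟨hv, hvA⟩⟩
  rw [Finset.mem_sdiff] at hy
  have hxy : lx x y := by
    rw [lx_iff]
    exact (hxmin u hu).trans_lt
      (((lx_iff _ _).1 huv).trans_le (hymax v (Finset.mem_sdiff.2 ⟨hv, hvA⟩)))
  have h0 : x 0 < y 0 := by
    obtain ⟨p, hp1, hp2⟩ := id hxy
    by_cases hp : p = 0
    · rw [← hp]; exact hp2
    · exact absurd (hcomp 0 x hx y hy.1 (hp1 0 (Fin.pos_iff_ne_zero.2 hp)) hxy) hy.2
  have hlt := swap_key hmono hA hcomp hx hy.1 hy.2 h0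
  have hyB : y ∉ A.erase x := fun h => hy.2 (Finset.mem_of_mem_erase h)
  have hCeq : (insert y (A.erase x)).card = A.card := by
    rw [Finset.card_insert_of_notMem hyB, Finset.card_erase_add_one hx]
  have hxl := mem_level.1 (hA hx)
  have hyl := mem_level.1 hy.1
  have hsub : shad a (insert y (A.erase x)) ⊆
      shad a (A.erase x) ∪ (if y (Fin.last _) + 1 < a (Fin.last _) then
        {y + Pi.single (Fin.last _) 1} else ∅) := by
    intro z hz
    obtain ⟨hzb, w, hw, i, rfl⟩ := mem_shad.1 hz
    rw [Finset.mem_union]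
    rcases Finset.mem_insert.1 hw with rfl | hw
    · by_cases hil : i = Fin.last _
      · right
        subst hil
        have := hzb (Fin.last _)
        simp only [Pi.add_apply, Pi.single_eq_same] at this
        rw [if_pos this]; simp
      · left
        have := hzb i
        simp only [Pi.add_apply, Pi.single_eq_same] at this
        obtain ⟨t, ht, hteq, hti, htl, htk⟩ := exists_move hy.1 hil this (by omega)
        have hwt : lx w t := by
          refine ⟨i, fun j hj => (htk j hj.ne ?_).symm, by omega⟩
          intro hjl
          rw [hjl] at hj
          exact absurd (Fin.le_last i) (not_le.2 hj)
        refine mem_shad.2 ⟨hzb, t, ?_, Fin.last _, hteq.symm⟩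
        have htA : t ∈ A := by
          by_contra htA
          have := hymax t (Finset.mem_sdiff.2 ⟨ht, htA⟩)
          exact absurd ((lx_iff _ _).1 hwt) (not_lt.2 this)
        refine Finset.mem_erase.2 ⟨?_, htA⟩
        rintro rfl
        exact lx_irrefl _ (lx_trans hxy hwt)
    · left
      exact mem_shad.2 ⟨hzb, w, hw, i, rfl⟩
  have hsub2 : shad a (A.erase x) ∪ (if y (Fin.last _) + 1 < a (Fin.last _) then
        {x + Pi.single (Fin.last _) 1} else ∅) ⊆ shad a A := by
    intro z hz
    rcases Finset.mem_union.1 hz with hz | hz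
    · exact shad_mono (Finset.erase_subset _ _) hz
    · split_ifs at hz with hc
      · rw [Finset.mem_singleton] at hz
        subst hz
        refine mem_shad.2 ⟨fun i => ?_, x, hx, _, rfl⟩
        by_cases hi : i = Fin.last _
        · subst hi; simp; omega
        · simp [hi, hxl.1 i]
      · simp at hz
  have hnot : x + Pi.single (Fin.last _) 1 ∉ shad a (A.erase x) := by
    intro hz
    obtain ⟨-, w, hw, i, hi⟩ := mem_shad.1 hz
    rw [Finset.mem_erase] at hw
    have hil : i ≠ Fin.last _ := by
      rintro rfl
      exact hw.1 (add_right_cancel hi).symm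
    have hlw : lx w x := by
      refine ⟨i, fun j hj => ?_, ?_⟩
      · have := congrFun hi j
        have hjl : j ≠ Fin.last _ := by
          intro hjl
          rw [hjl] at hj
          exact absurd (Fin.le_last i) (not_le.2 hj)
        simp [hj.ne, hjl] at this
        exact this.symm
      · have := congrFun hi i
        simp [hil] at this
        omega
    exact absurd ((lx_iff _ _).1 hlw) (not_lt.2 (hxmin w hw.2))
  refine ⟨insert y (A.erase x), ?_, hCeq, ?_, ?_⟩
  · intro w hw
    rcases Finset.mem_insert.1 hw with rfl | hw
    · exact hy.1
    · exact hA (Finset.mem_of_mem_erase hw)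
  · refine (Finset.card_le_card hsub).trans (le_trans ?_ (Finset.card_le_card hsub2))
    split_ifs with hc
    · refine (Finset.card_union_le _ _).trans ?_
      rw [Finset.card_union_of_disjoint (by simpa using hnot)]
      simp
    · simp
  · rw [Finset.sum_insert hyB, ← Finset.add_sum_erase A _ hx]
    have := rk_lt hy.1 hxy
    omega

theorem CL_two (a : Fin 2 → ℕ) (hmono : Monotone a) : CL a := by
  classical
  intro d A L hA hL hc
  have ha01 : a 0 ≤ a 1 := hmono (Fin.zero_le _)
  have memL : ∀ {u : Fin 2 → ℕ} {d : ℕ}, u ∈ level a d ↔ u 0 < a 0 ∧ u 1 < a 1 ∧ u 0 + u 1 = d := by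
    intro u d
    rw [mem_level, Fin.forall_fin_two, Fin.sum_univ_two, and_assoc]
  have ext2 : ∀ {u v : Fin 2 → ℕ} {d : ℕ}, u ∈ level a d → v ∈ level a d → u 0 = v 0 → u = v := by
    intro u v d hu hv h
    rw [memL] at hu hv
    funext i
    fin_cases i
    · exact h
    · show u 1 = v 1
      omega
  by_cases hAe : A = ∅
  · subst hAe
    have : L = ∅ := by simpa using hc
    rw [this]
  have hcpos : 0 < A.card := Finset.card_pos.2 (Finset.nonempty_iff_ne_empty.2 hAe)
  by_cases hd : d + 1 < a 0
  · -- no boundary effect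
    have h1 : (shad a L).card ≤ L.card + 1 := by
      -- smallest element of L
      have hLne : L.Nonempty := Finset.card_pos.1 (by omega)
      obtain ⟨u, hu, hmin⟩ := Finset.exists_min_image L (fun u => u 0) hLne
      have hsub : shad a L ⊆ insert (u + Pi.single 1 1) (L.image fun w => w + Pi.single 0 1) := by
        intro z hz
        obtain ⟨hzb, w, hw, i, rfl⟩ := mem_shad.1 hz
        rw [Finset.mem_insert, Finset.mem_image]
        have hwl := memL.1 (hL.1 hw)
        fin_cases i
        · right; exact ⟨w, hw, rfl⟩
        · by_cases hwu : w 0 = u 0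
          · left
            have := ext2 (hL.1 hw) (hL.1 hu) hwu
            rw [this]; rfl
          · right
            have h3 := hmin w hw
            have hw0 : 0 < w 0 := by omega
            have h4 := hzb 1
            obtain ⟨t, ht, hteq, ht1, ht0, -⟩ := exists_move (hL.1 hw) (i := 1) (j := 0)
              (by simp) (by simpa using h4) hw0
            refine ⟨t, ?_, hteq⟩
            by_cases htu : t 0 = u 0
            · rw [ext2 ht (hL.1 hu) htu]; exact hu
            · refine hL.2 u hu t ht ⟨0, fun j hj => absurd hj (by simp), by omega⟩
      refine (Finset.card_le_card hsub).trans ((Finset.card_insert_le _ _).trans ?_)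
      have := Finset.card_image_le (s := L) (f := fun w => w + Pi.single 0 1)
      omega
    have h2 : A.card + 1 ≤ (shad a A).card := by
      obtain ⟨u, hu, hmin⟩ := Finset.exists_min_image A (fun u => u 0) (Finset.card_pos.1 hcpos)
      have hul := memL.1 (hA hu)
      have hsub : insert (u + Pi.single 1 1) (A.image fun w => w + Pi.single 0 1) ⊆ shad a A := by
        intro z hz
        rw [Finset.mem_insert, Finset.mem_image] at hz
        rw [mem_shad, Fin.forall_fin_two]
        rcases hz with rfl | ⟨w, hw, rfl⟩
        · refine ⟨?_, u, hu, 1, rfl⟩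
          simp
          omega
        · refine ⟨?_, w, hw, 0, rfl⟩
          have hwl := memL.1 (hA hw)
          simp
          omega
      refine le_trans ?_ (Finset.card_le_card hsub)
      rw [Finset.card_insert_of_notMem, Finset.card_image_of_injective _ (add_left_injective _)]
      rw [Finset.mem_image]
      rintro ⟨w, hw, h⟩
      have h3 := congrFun h 0
      simp at h3
      have := hmin w hw
      omega
    omega
  · by_cases hAl : A = level a d
    · have : L ⊆ A := hAl ▸ hL.1
      rw [Finset.eq_of_subset_of_card_le this hc.ge]
    · have h1 : (shad a L).card ≤ L.card := by
        apply Finset.card_le_card_of_injOn (t := L)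
          (fun v => fun i => if i = 0 then v 0 else v 1 - 1)
        · intro z hz
          obtain ⟨hzb, w, hw, i, rfl⟩ := mem_shad.1 hz
          have hwl := memL.1 (hL.1 hw)
          rw [Fin.forall_fin_two] at hzb
          fin_cases i
          · simp at hzb
            obtain ⟨t, ht, hteq, ht0, ht1, -⟩ := exists_move (hL.1 hw) (i := 0) (j := 1)
              (by simp) hzb.1 (by omega)
            have htL : t ∈ L := hL.2 w hw t ht ⟨0, fun j hj => absurd hj (by simp), by omega⟩
            refine Finset.mem_coe.2 (Eq.subst (motive := fun z => z ∈ L) ?_ htL)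
            funext k
            fin_cases k
            · simp; omega
            · simp; omega
          · refine Finset.mem_coe.2 (Eq.subst (motive := fun z => z ∈ L) ?_ hw)
            funext k
            fin_cases k
            · simp
            · simp
        · intro z hz z' hz' h
          have e1 := shad_subset_level hL.1 hz
          have e2 := shad_subset_level hL.1 hz'
          exact ext2 e1 e2 (by simpa using congrFun h 0)
      obtain ⟨y, hy, hyA⟩ : ∃ y ∈ level a d, y ∉ A := by
        by_contra hcon
        push Not at hcon
        exact hAl (Finset.Subset.antisymm hA hcon)
      have hyl := memL.1 hy
      have h2 : A.card ≤ (shad a A).card := by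
        apply Finset.card_le_card_of_injOn
          (fun u => if u 0 < y 0 then u + Pi.single 0 1 else u + Pi.single 1 1)
        · intro u hu
          have hul := memL.1 (hA hu)
          have hne : u 0 ≠ y 0 := fun h => hyA (ext2 (hA hu) hy h ▸ hu)
          dsimp only
          split_ifs with hlt
          · refine mem_shad.2 ⟨?_, u, hu, 0, rfl⟩
            rw [Fin.forall_fin_two]; simp; omega
          · refine mem_shad.2 ⟨?_, u, hu, 1, rfl⟩
            rw [Fin.forall_fin_two]; simp; omega
        · intro u hu v hv h
          have hne : u 0 ≠ y 0 := fun h => hyA (ext2 (hA hu) hy h ▸ hu)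
          have hne' : v 0 ≠ y 0 := fun h => hyA (ext2 (hA hv) hy h ▸ hv)
          apply ext2 (hA hu) (hA hv)
          have h0 := congrFun h 0
          dsimp only at h0
          split_ifs at h0 <;> simp at h0 <;> omega
      omega

theorem CL_all : ∀ (n : ℕ) (a : Fin n → ℕ), Monotone a → CL a := by
  intro n
  induction n with
  | zero =>
    intro a _ d A L hA hL hc
    have : shad a L = ∅ := by
      ext v
      rw [mem_shad]
      simp
    rw [this]; simp
  | succ n ih =>
    intro a hmono
    match n, ih, a, hmono with
    | 0, _, a, _ =>
      intro d A L hA hL hc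
      have hone : ∀ u ∈ level a d, ∀ v ∈ level a d, u = v := by
        intro u hu v hv
        have h1 := (mem_level.1 hu).2
        have h2 := (mem_level.1 hv).2
        funext i
        fin_cases i
        simp at h1 h2 ⊢
        omega
      by_cases hAe : A = ∅
      · subst hAe
        have : L = ∅ := by simpa using hc
        rw [this]
      · obtain ⟨x, hx⟩ := Finset.nonempty_iff_ne_empty.2 hAe
        have : L ⊆ A := fun u hu => hone x (hA hx) u (hL.1 hu) ▸ hx
        rw [Finset.eq_of_subset_of_card_le this hc.ge]
    | 1, _, a, hmono => exact CL_two a hmono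
    | m + 2, ih, a, hmono =>
      intro d A L hA hL hc
      have main : ∀ k : ℕ, ∀ A : Finset (Fin (m + 3) → ℕ), A ⊆ level a d → L.card = A.card →
          ∑ u ∈ A, rk a d u = k → (shad a L).card ≤ (shad a A).card := by
        intro k
        induction k using Nat.strong_induction_on with
        | _ k ihk =>
          intro A hA hc hk
          by_cases hcomp : ∀ i, Comp a d i A
          · by_cases hinit : Init a d A
            · exact Finset.card_le_card (shad_mono (hL.subset_of_card hinit hc.le))
            · obtain ⟨C, hC, hCc, hCs, hCr⟩ := swap_step hmono hA hcomp hinit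
              exact (ihk _ (hk ▸ hCr) C hC (hc.trans hCc.symm) rfl).trans hCs
          · push Not at hcomp
            obtain ⟨i, hi⟩ := hcomp
            obtain ⟨C, hC, hCc, hCs, hCr⟩ := compress i
              (ih (i.removeNth a) (fun p q hpq => hmono
                ((Fin.strictMono_succAbove i).monotone hpq))) hA hi
            exact (ihk _ (hk ▸ hCr) C hC (hc.trans hCc.symm) rfl).trans hCs
      exact main _ A hA hc rfl

end EGH

namespace EGH

/-! combinatorial duality and counting -/

theorem card_level_small {r : ℕ} (a : Fin (r + 1) → ℕ) (d : ℕ) (hd : d < a (Fin.last r)) :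
    (level a d).card =
      ∑ j ∈ Finset.range (d + 1), (level ((Fin.last r).removeNth a) (d - j)).card := by
  rw [card_eq_sum_sl (Fin.last r) _ (d + 1)]
  · apply Finset.sum_congr rfl
    intro j hj
    rw [Finset.mem_range] at hj
    congr 1
    ext w
    rw [mem_sl, insertNth_mem_level]
    exact ⟨fun h => h.2.2, fun h => ⟨by omega, by omega, h⟩⟩
  · intro u hu
    have := (mem_level.1 hu).2
    have h2 : u (Fin.last r) ≤ ∑ i, u i :=
      Finset.single_le_sum (fun i _ => Nat.zero_le _) (Finset.mem_univ _)
    omega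

theorem card_level_large {r : ℕ} (a : Fin (r + 1) → ℕ) (d : ℕ) :
    (level a (d + a (Fin.last r))).card +
      ∑ j ∈ Finset.range (d + 1), (level ((Fin.last r).removeNth a) (d - j)).card =
      ∑ j ∈ Finset.range (d + a (Fin.last r) + 1),
        (level ((Fin.last r).removeNth a) (d + a (Fin.last r) - j)).card := by
  rw [card_eq_sum_sl (Fin.last r) _ (a (Fin.last r)) (fun u hu => (mem_level.1 hu).1 _)]
  rw [show d + a (Fin.last r) + 1 = a (Fin.last r) + (d + 1) by omega, Finset.sum_range_add _ (a (Fin.last r)) (d + 1)]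
  congr 1
  · apply Finset.sum_congr rfl
    intro j hj
    rw [Finset.mem_range] at hj
    congr 1
    ext w
    rw [mem_sl, insertNth_mem_level]
    exact ⟨fun h => h.2.2, fun h => ⟨by omega, by omega, h⟩⟩
  · apply Finset.sum_congr rfl
    intro j hj
    congr 2
    omega

def rev {n : ℕ} (a : Fin n → ℕ) (u : Fin n → ℕ) : Fin n → ℕ := fun i => a i - 1 - u i

theorem rev_rev {n : ℕ} {a u : Fin n → ℕ} (h : ∀ i, u i < a i) : rev a (rev a u) = u := by
  funext i
  have := h i
  simp only [rev]
  omega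

theorem rev_mem {n : ℕ} {a u : Fin n → ℕ} {d t : ℕ} (hdt : d + t = ∑ i, (a i - 1))
    (hu : u ∈ level a d) : rev a u ∈ level a t := by
  rw [mem_level] at *
  refine ⟨fun i => ?_, ?_⟩
  · have := hu.1 i
    simp only [rev]; omega
  · have : ∑ i, rev a u i + ∑ i, u i = ∑ i, (a i - 1) := by
      rw [← Finset.sum_add_distrib]
      apply Finset.sum_congr rfl
      intro i _
      have := hu.1 i
      simp only [rev]; omega
    omega

theorem lx_rev {n : ℕ} {a u v : Fin n → ℕ} (hv : ∀ i, v i < a i) (h : lx u v) :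
    lx (rev a v) (rev a u) := by
  obtain ⟨p, hp1, hp2⟩ := h
  refine ⟨p, fun j hj => by simp only [rev, hp1 j hj], ?_⟩
  have := hv p
  simp only [rev]; omega

theorem card_level_rev {n : ℕ} {a : Fin n → ℕ} {d t : ℕ} (hdt : d + t = ∑ i, (a i - 1)) :
    (level a d).card = (level a t).card := by
  apply Finset.card_bij' (fun u _ => rev a u) (fun u _ => rev a u)
  · exact fun u hu => rev_mem hdt hu
  · exact fun u hu => rev_mem (by omega) hu
  · exact fun u hu => rev_rev (mem_level.1 hu).1
  · exact fun u hu => rev_rev (mem_level.1 hu).1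

open Classical in
theorem exists_rev_compl {n : ℕ} {a : Fin n → ℕ} {d t : ℕ} (hdt : d + t = ∑ i, (a i - 1))
    {L : Finset (Fin n → ℕ)} (hL : Init a d L) :
    ∃ L', Init a t L' ∧ L'.card + L.card = (level a d).card ∧
      ∀ u ∈ level a d, (rev a u ∈ L' ↔ u ∉ L) := by
  have key : ∀ u ∈ level a d, (rev a u ∈ (level a t).filter (fun u => rev a u ∉ L) ↔ u ∉ L) := by
    intro u hu
    rw [Finset.mem_filter, rev_rev (mem_level.1 hu).1]
    exact ⟨fun h => h.2, fun h => ⟨rev_mem hdt hu, h⟩⟩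
  refine ⟨(level a t).filter fun u => rev a u ∉ L, ⟨Finset.filter_subset _ _, ?_⟩, ?_, key⟩
  · intro u hu v hv huv
    rw [Finset.mem_filter] at hu ⊢
    refine ⟨hv, fun hvL => hu.2 ?_⟩
    exact hL.2 _ hvL _ (rev_mem (by omega) hu.1) (lx_rev (mem_level.1 hv).1 huv)
  · have : ((level a t).filter fun u => rev a u ∉ L).card = (level a d \ L).card := by
      apply Finset.card_bij' (fun u _ => rev a u) (fun u _ => rev a u)
      · intro u hu
        rw [Finset.mem_filter] at hu
        exact Finset.mem_sdiff.2 ⟨rev_mem (by omega) hu.1, hu.2⟩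
      · intro u hu
        rw [Finset.mem_sdiff] at hu
        exact (key u hu.1).2 hu.2
      · exact fun u hu => rev_rev (mem_level.1 (Finset.mem_filter.1 hu).1).1
      · exact fun u hu => rev_rev (mem_level.1 (Finset.mem_sdiff.1 hu).1).1
    rw [this, Finset.card_sdiff_add_card_eq_card hL.1]

theorem dual_comb {n : ℕ} {a : Fin n → ℕ} {d t : ℕ} (hdt : d + 1 + t = ∑ i, (a i - 1))
    {L : Finset (Fin n → ℕ)} (hL : Init a d L) (v : ℕ) (hv : v ≤ (level a (d + 1)).card)
    (H : ∀ M', Init a t M' → M'.card + v = (level a (d + 1)).card →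
      (shad a M').card + L.card ≤ (level a d).card) : (shad a L).card ≤ v := by
  by_contra hcon
  push Not at hcon
  obtain ⟨M, hM, hMc⟩ := exists_init a (d + 1) v hv
  obtain ⟨M', hM', hM'c, hM'r⟩ := exists_rev_compl hdt hM
  obtain ⟨L', hL', hL'c, hL'r⟩ := exists_rev_compl (d := d) (t := t + 1) (by omega) hL
  have h1 := H M' hM' (by omega)
  have hsub : shad a M' ⊆ L' := hM'.shad.subset_of_card hL' (by omega)
  have : ∃ z ∈ shad a L, z ∉ M := by
    by_contra hc
    push Not at hc
    have := Finset.card_le_card (show shad a L ⊆ M from hc)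
    omega
  obtain ⟨z, hz, hzM⟩ := this
  have hzl := shad_subset_level hL.1 hz
  obtain ⟨hzb, u, hu, i, rfl⟩ := mem_shad.1 hz
  have h2 := (hM'r _ hzl).2 hzM
  have hub := mem_level.1 (hL.1 hu)
  have h3 : rev a u = rev a (u + Pi.single i 1) + Pi.single i 1 := by
    funext k
    have hk := hzb k
    by_cases hki : k = i
    · subst hki; simp [rev] at hk ⊢; omega
    · simp [rev, hki]
  have h4 : rev a u ∈ shad a M' := by
    refine mem_shad.2 ⟨(mem_level.1 (rev_mem (t := t + 1) (by omega) (hL.1 hu))).1, _, h2, i, h3⟩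
  exact (hL'r u (hL.1 hu)).1 (hsub h4) hu

theorem card_level_top {n : ℕ} {a : Fin n → ℕ} (ha : ∀ i, 1 ≤ a i) :
    (level a (∑ i, (a i - 1))).card = 1 := by
  rw [card_level_rev (t := 0) (by omega), Finset.card_eq_one]
  refine ⟨0, ?_⟩
  ext u
  rw [mem_level, Finset.mem_singleton]
  constructor
  · intro h
    funext i
    exact Finset.sum_eq_zero_iff.1 h.2 i (Finset.mem_univ _)
  · rintro rfl
    exact ⟨fun i => by have := ha i; simp; omega, by simp⟩

theorem card_level_above {n : ℕ} {a : Fin n → ℕ} {d : ℕ} (hd : ∑ i, (a i - 1) < d) :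
    level a d = ∅ := by
  ext u
  rw [mem_level]
  simp only [Finset.notMem_empty, iff_false, not_and]
  intro h1 h2
  have : ∑ i, u i ≤ ∑ i, (a i - 1) := Finset.sum_le_sum fun i _ => by have := h1 i; omega
  omega

end EGH

namespace EGH

/-! basic graded algebra -/

section
variable {K : Type} [Field K] {n : ℕ}

theorem hc_mul {l : MvPolynomial (Fin n) K} {e : ℕ} (hl : l.IsHomogeneous e)
    (v : MvPolynomial (Fin n) K) (d : ℕ) :
    homogeneousComponent (d + e) (l * v) = l * homogeneousComponent d v := by
  induction v using MvPolynomial.induction_on' with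
  | monomial u c =>
    have hm : (monomial u c : MvPolynomial (Fin n) K).IsHomogeneous (u.degree) :=
      isHomogeneous_monomial c rfl
    have h1 : (l * monomial u c).IsHomogeneous (e + u.degree) := hl.mul hm
    rw [homogeneousComponent_of_mem h1, homogeneousComponent_of_mem hm]
    by_cases h : u.degree = d
    · rw [if_pos (by omega), if_pos (by omega)]
    · rw [if_neg (by omega), if_neg (by omega), mul_zero]
  | add p q hp hq => rw [mul_add, map_add, hp, hq, map_add, mul_add]

theorem hc_mul_lt {l : MvPolynomial (Fin n) K} {e : ℕ} (hl : l.IsHomogeneous e)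
    (v : MvPolynomial (Fin n) K) (d : ℕ) (hd : d < e) :
    homogeneousComponent d (l * v) = 0 := by
  induction v using MvPolynomial.induction_on' with
  | monomial u c =>
    have hm : (monomial u c : MvPolynomial (Fin n) K).IsHomogeneous (u.degree) :=
      isHomogeneous_monomial c rfl
    have h1 : (l * monomial u c).IsHomogeneous (e + u.degree) := hl.mul hm
    rw [homogeneousComponent_of_mem h1, if_neg (by omega)]
  | add p q hp hq => rw [mul_add, map_add, hp, hq, add_zero]

theorem hc_self {u : MvPolynomial (Fin n) K} {d : ℕ} (hu : u.IsHomogeneous d) :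
    homogeneousComponent d u = u := by
  rw [homogeneousComponent_of_mem hu, if_pos rfl]

theorem mem_of_hc {I : Ideal (MvPolynomial (Fin n) K)} {u : MvPolynomial (Fin n) K}
    (h : ∀ d, homogeneousComponent d u ∈ I) : u ∈ I := by
  rw [← sum_homogeneousComponent u]
  exact Ideal.sum_mem _ fun i _ => h i

theorem mem_sup_span {I : Ideal (MvPolynomial (Fin n) K)} {l x : MvPolynomial (Fin n) K} :
    x ∈ I ⊔ Ideal.span {l} ↔ ∃ e ∈ I, ∃ v, x = e + l * v := by
  rw [Submodule.mem_sup]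
  constructor
  · rintro ⟨y, hy, z, hz, rfl⟩
    obtain ⟨v, rfl⟩ := Ideal.mem_span_singleton'.1 hz
    exact ⟨y, hy, v, by ring⟩
  · rintro ⟨e, he, v, rfl⟩
    exact ⟨e, he, l * v, Ideal.mem_span_singleton'.2 ⟨v, by ring⟩, rfl⟩

theorem homog_sup_span {I : Ideal (MvPolynomial (Fin n) K)} {l : MvPolynomial (Fin n) K} {e : ℕ}
    (hI : IsHomog I) (hl : l.IsHomogeneous e) : IsHomog (I ⊔ Ideal.span {l}) := by
  intro f hf d
  obtain ⟨y, hy, v, rfl⟩ := mem_sup_span.1 hf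
  rw [map_add]
  by_cases hd : d < e
  · rw [hc_mul_lt hl v d hd, add_zero]
    exact Ideal.mem_sup_left (hI _ hy _)
  · obtain ⟨d, rfl⟩ := Nat.exists_eq_add_of_le' (not_lt.1 hd)
    rw [hc_mul hl]
    exact mem_sup_span.2 ⟨_, hI _ hy _, _, rfl⟩

theorem mem_sup_span_homog {I : Ideal (MvPolynomial (Fin n) K)} {l x : MvPolynomial (Fin n) K}
    {e d : ℕ} (hI : IsHomog I) (hl : l.IsHomogeneous e) (hx : x.IsHomogeneous (d + e))
    (h : x ∈ I ⊔ Ideal.span {l}) :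
    ∃ y ∈ I, y.IsHomogeneous (d + e) ∧ ∃ v, v.IsHomogeneous d ∧ x = y + l * v := by
  obtain ⟨y, hy, v, rfl⟩ := mem_sup_span.1 h
  refine ⟨_, hI _ hy (d + e), homogeneousComponent_isHomogeneous _ _, homogeneousComponent d v,
    homogeneousComponent_isHomogeneous _ _, ?_⟩
  rw [← hc_mul hl, ← map_add, hc_self hx]

theorem mem_sup_span_lt {I : Ideal (MvPolynomial (Fin n) K)} {l x : MvPolynomial (Fin n) K}
    {e d : ℕ} (hI : IsHomog I) (hl : l.IsHomogeneous e) (hx : x.IsHomogeneous d) (hd : d < e)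
    (h : x ∈ I ⊔ Ideal.span {l}) : x ∈ I := by
  obtain ⟨y, hy, v, rfl⟩ := mem_sup_span.1 h
  rw [← hc_self hx, map_add, hc_mul_lt hl v d hd, add_zero]
  exact hI _ hy _

/-- The colon ideal by an element. -/
noncomputable def col (I : Ideal (MvPolynomial (Fin n) K)) (l : MvPolynomial (Fin n) K) :
    Ideal (MvPolynomial (Fin n) K) := Submodule.comap (LinearMap.mulLeft _ l) I

theorem mem_col {I : Ideal (MvPolynomial (Fin n) K)} {l u : MvPolynomial (Fin n) K} :
    u ∈ col I l ↔ l * u ∈ I := Iff.rfl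

theorem le_col (I : Ideal (MvPolynomial (Fin n) K)) (l : MvPolynomial (Fin n) K) :
    I ≤ col I l := fun _ hu => I.mul_mem_left _ hu

theorem homog_col {I : Ideal (MvPolynomial (Fin n) K)} {l : MvPolynomial (Fin n) K} {e : ℕ}
    (hI : IsHomog I) (hl : l.IsHomogeneous e) : IsHomog (col I l) := by
  intro f hf d
  rw [mem_col, ← hc_mul hl]
  exact hI _ hf _

instance (d : ℕ) : FiniteDimensional K (homogeneousSubmodule (Fin n) K d) :=
  Module.Finite.iff_fg.2 (homogeneousSubmodule_fg _ _ d)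

/-- The degree `d` piece. -/
noncomputable abbrev pc (I : Ideal (MvPolynomial (Fin n) K)) (d : ℕ) : Submodule K (MvPolynomial (Fin n) K) :=
  Submodule.restrictScalars K I ⊓ homogeneousSubmodule (Fin n) K d

theorem mem_pc {I : Ideal (MvPolynomial (Fin n) K)} {d : ℕ} {u : MvPolynomial (Fin n) K} :
    u ∈ pc I d ↔ u ∈ I ∧ u.IsHomogeneous d := Iff.rfl

instance (I : Ideal (MvPolynomial (Fin n) K)) (d : ℕ) : FiniteDimensional K (pc I d) :=
  Submodule.finiteDimensional_of_le (inf_le_right : pc I d ≤ homogeneousSubmodule (Fin n) K d)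

theorem hilb_eq (I : Ideal (MvPolynomial (Fin n) K)) (d : ℕ) :
    hilb I d = Module.finrank K (pc I d) := rfl

theorem hilb_mono {I J : Ideal (MvPolynomial (Fin n) K)} (h : I ≤ J) (d : ℕ) :
    hilb I d ≤ hilb J d :=
  Submodule.finrank_mono (fun _ hu => ⟨h hu.1, hu.2⟩ : pc I d ≤ pc J d)

theorem pc_eq_of_hilb {I J : Ideal (MvPolynomial (Fin n) K)} {d : ℕ} (h : I ≤ J)
    (hh : hilb J d ≤ hilb I d) {u : MvPolynomial (Fin n) K} (hu : u ∈ J)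
    (hd : u.IsHomogeneous d) : u ∈ I := by
  have h1 : pc I d = pc J d :=
    Submodule.eq_of_le_of_finrank_le (fun _ hu => ⟨h hu.1, hu.2⟩) hh
  have : u ∈ pc J d := ⟨hu, hd⟩
  rw [← h1] at this
  exact this.1

theorem hilb_exact {I : Ideal (MvPolynomial (Fin n) K)} {l : MvPolynomial (Fin n) K} {e : ℕ}
    (hI : IsHomog I) (hl : l.IsHomogeneous e) (hl0 : l ≠ 0) (d : ℕ) :
    hilb (I ⊔ Ideal.span {l}) (d + e) + hilb (col I l) d = hilb I (d + e) + hilb (⊤ : Ideal (MvPolynomial (Fin n) K)) d := by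
  let m : MvPolynomial (Fin n) K →ₗ[K] MvPolynomial (Fin n) K := LinearMap.mulLeft K l
  have hm : Function.Injective m := fun x y h => mul_left_cancel₀ hl0 h
  have h1 : pc (I ⊔ Ideal.span {l}) (d + e) = pc I (d + e) ⊔ (pc ⊤ d).map m := by
    apply le_antisymm
    · rintro x ⟨hx, hd⟩
      obtain ⟨y, hy, hyh, v, hv, rfl⟩ := mem_sup_span_homog hI hl hd hx
      exact Submodule.add_mem_sup ⟨hy, hyh⟩ ⟨v, ⟨trivial, hv⟩, rfl⟩
    · apply sup_le
      · exact fun x hx => ⟨Ideal.mem_sup_left hx.1, hx.2⟩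
      · rintro _ ⟨v, hv, rfl⟩
        refine ⟨mem_sup_span.2 ⟨0, I.zero_mem, v, by simp [m]⟩, ?_⟩
        have := hl.mul (show v.IsHomogeneous d from hv.2)
        rw [add_comm] at this
        exact this
  have h2 : pc I (d + e) ⊓ (pc ⊤ d).map m = (pc (col I l) d).map m := by
    apply le_antisymm
    · rintro _ ⟨hx, v, hv, rfl⟩
      exact ⟨v, ⟨hx.1, hv.2⟩, rfl⟩
    · rintro _ ⟨v, hv, rfl⟩
      refine ⟨⟨hv.1, ?_⟩, v, ⟨trivial, hv.2⟩, rfl⟩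
      have := hl.mul (show v.IsHomogeneous d from hv.2)
      rw [add_comm] at this
      exact this
  have h3 := Submodule.finrank_sup_add_finrank_inf_eq (pc I (d + e)) ((pc ⊤ d).map m)
  rw [← h1, h2, ← (Submodule.equivMapOfInjective m hm _).finrank_eq,
    ← (Submodule.equivMapOfInjective m hm _).finrank_eq] at h3
  exact h3

theorem hilb_sup_lt {I : Ideal (MvPolynomial (Fin n) K)} {l : MvPolynomial (Fin n) K} {e d : ℕ}
    (hI : IsHomog I) (hl : l.IsHomogeneous e) (hd : d < e) :
    hilb (I ⊔ Ideal.span {l}) d = hilb I d := by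
  apply le_antisymm
  · exact Submodule.finrank_mono (fun x hx => ⟨mem_sup_span_lt hI hl hx.2 hd hx.1, hx.2⟩ :
      pc (I ⊔ Ideal.span {l}) d ≤ pc I d)
  · exact hilb_mono le_sup_left d

/-- The data of an Artinian ideal behaving like a complete intersection. -/
structure Gor {r : ℕ} (b : Ideal (MvPolynomial (Fin n) K)) (a : Fin r → ℕ) : Prop where
  hom : IsHomog b
  card : ∀ d, hilb b d + (level a d).card = hilb (⊤ : Ideal (MvPolynomial (Fin n) K)) d
  soc : ∀ (u : MvPolynomial (Fin n) K) (d : ℕ), u.IsHomogeneous d → d < ∑ i, (a i - 1) →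
    (∀ i, X i * u ∈ b) → u ∈ b

/-- Additionally, the Macaulay type bound. -/
structure Good {r : ℕ} (b : Ideal (MvPolynomial (Fin n) K)) (a : Fin r → ℕ) : Prop
    extends Gor b a where
  mac : ∀ I : Ideal (MvPolynomial (Fin n) K), IsHomog I → b ≤ I → ∀ d L, Init a d L →
    L.card + hilb b d = hilb I d → (shad a L).card + hilb b (d + 1) ≤ hilb I (d + 1)

end

end EGH

namespace EGH

section
variable {K : Type} [Field K] {n : ℕ}

/-- The colon ideal. -/
noncomputable def cl (b I : Ideal (MvPolynomial (Fin n) K)) : Ideal (MvPolynomial (Fin n) K) :=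
  ⨅ u ∈ I, col b u

theorem mem_cl {b I : Ideal (MvPolynomial (Fin n) K)} {v : MvPolynomial (Fin n) K} :
    v ∈ cl b I ↔ ∀ u ∈ I, u * v ∈ b := by
  simp only [cl, Submodule.mem_iInf, mem_col]

theorem le_cl (b I : Ideal (MvPolynomial (Fin n) K)) : b ≤ cl b I :=
  fun _ hv => mem_cl.2 fun _ _ => b.mul_mem_left _ hv

theorem homog_cl {b I : Ideal (MvPolynomial (Fin n) K)} (hb : IsHomog b) (hI : IsHomog I) :
    IsHomog (cl b I) := by
  intro v hv k
  rw [mem_cl] at hv ⊢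
  intro u hu
  rw [← sum_homogeneousComponent u, Finset.sum_mul]
  refine Ideal.sum_mem _ fun j _ => ?_
  rw [← hc_mul (homogeneousComponent_isHomogeneous j u)]
  exact hb _ (hv _ (hI _ hu _)) _

theorem mem_of_X_mem {P : Ideal (MvPolynomial (Fin n) K)} (h : ∀ i, X i ∈ P)
    {l : MvPolynomial (Fin n) K} {e : ℕ} (hl : l.IsHomogeneous e) (he : 0 < e) : l ∈ P := by
  rw [l.as_sum]
  refine Ideal.sum_mem _ fun s hs => ?_
  have h1 : s ≠ 0 := by
    rintro rfl
    have := hl (mem_support_iff.1 hs)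
    simp at this
    omega
  obtain ⟨i, hi⟩ := Finsupp.ne_iff.1 h1
  have h2 : (X i : MvPolynomial (Fin n) K) ∣ monomial s (coeff s l) := by
    rw [X_dvd_monomial]
    right
    simpa using hi
  exact Ideal.mem_of_dvd _ h2 (h i)

namespace Gor
variable {r : ℕ} {b : Ideal (MvPolynomial (Fin n) K)} {a : Fin r → ℕ}

theorem nondeg (G : Gor b a) : ∀ (t d : ℕ) (u : MvPolynomial (Fin n) K), u.IsHomogeneous d →
    d + t = ∑ i, (a i - 1) → (∀ v : MvPolynomial (Fin n) K, v.IsHomogeneous t → u * v ∈ b) →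
    u ∈ b := by
  intro t
  induction t with
  | zero =>
    intro d u _ _ h
    simpa using h 1 (isHomogeneous_one _ _)
  | succ t ih =>
    intro d u hu hd h
    refine G.soc u d hu (by omega) fun i => ?_
    refine ih (d + 1) _ ?_ (by omega) fun v hv => ?_
    · rw [add_comm]; exact (isHomogeneous_X K i).mul hu
    · have := h (X i * v) (by rw [add_comm]; exact (isHomogeneous_X K i).mul hv)
      convert this using 1
      ring

theorem above (G : Gor b a) {d : ℕ} (hd : ∑ i, (a i - 1) < d) {u : MvPolynomial (Fin n) K}
    (hu : u.IsHomogeneous d) : u ∈ b := by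
  have h := G.card d
  rw [card_level_above hd, Finset.card_empty] at h
  exact pc_eq_of_hilb (J := ⊤) le_top (by omega) trivial hu

theorem duality (G : Gor b a) (ha : ∀ i, 1 ≤ a i) {I : Ideal (MvPolynomial (Fin n) K)}
    (hI : IsHomog I) (hbI : b ≤ I) {d t : ℕ} (hdt : d + t = ∑ i, (a i - 1)) :
    hilb (cl b I) t + hilb I d = hilb (⊤ : Ideal (MvPolynomial (Fin n) K)) t + hilb b d := by
  set s := ∑ i, (a i - 1) with hs
  have h1 := G.card s
  rw [card_level_top ha] at h1
  have h2 : ∃ w : MvPolynomial (Fin n) K, w.IsHomogeneous s ∧ w ∉ b := by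
    by_contra hc
    push Not at hc
    have : pc ⊤ s ≤ pc b s := fun w hw => ⟨hc w hw.2, hw.2⟩
    have := Submodule.finrank_mono this
    rw [← hilb_eq, ← hilb_eq] at this
    omega
  obtain ⟨w, hw, hwb⟩ := h2
  obtain ⟨θ, hθw, hθ⟩ := Submodule.exists_le_ker_of_notMem
    (p := pc b s) (v := w) (fun h => hwb h.1)
  have h3 : pc b s = LinearMap.ker θ ⊓ pc ⊤ s := by
    apply Submodule.eq_of_le_of_finrank_le
    · exact fun x hx => ⟨hθ hx, trivial, hx.2⟩
    · have : LinearMap.ker θ ⊓ pc ⊤ s < pc ⊤ s := by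
        refine lt_of_le_of_ne inf_le_right fun h => hθw ?_
        have : w ∈ pc ⊤ s := ⟨trivial, hw⟩
        rw [← h] at this
        exact this.1
      have := Submodule.finrank_lt_finrank_of_lt this
      rw [← hilb_eq] at this ⊢
      omega
  have key : ∀ x : MvPolynomial (Fin n) K, x.IsHomogeneous s → (θ x = 0 ↔ x ∈ b) := by
    intro x hx
    constructor
    · intro h
      have : x ∈ LinearMap.ker θ ⊓ pc ⊤ s := ⟨h, trivial, hx⟩
      rw [← h3] at this
      exact this.1
    · intro h
      exact hθ ⟨h, hx⟩
  let β : pc I d →ₗ[K] Module.Dual K (pc (⊤ : Ideal (MvPolynomial (Fin n) K)) t) :=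
    ((LinearMap.mul K (MvPolynomial (Fin n) K)).compr₂ θ).domRestrict₁₂ (pc I d) (pc ⊤ t)
  have hβ : ∀ u v, β u v = θ (u.1 * v.1) := fun u v => rfl
  have hker : (LinearMap.ker β).map (pc I d).subtype = pc b d := by
    ext u
    constructor
    · rintro ⟨u, hu, rfl⟩
      refine ⟨G.nondeg t d _ u.2.2 hdt fun v hv => ?_, u.2.2⟩
      rw [← key _ (by rw [← hdt]; exact IsHomogeneous.mul u.2.2 hv)]
      have := LinearMap.congr_fun (LinearMap.mem_ker.1 hu) ⟨v, trivial, hv⟩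
      exact this
    · intro hu
      refine ⟨⟨u, hbI hu.1, hu.2⟩, ?_, rfl⟩
      refine LinearMap.mem_ker.2 (LinearMap.ext fun v => ?_)
      rw [hβ]
      exact (key _ (by rw [← hdt]; exact IsHomogeneous.mul hu.2 v.2.2)).2 (b.mul_mem_right _ hu.1)
  have hco : (LinearMap.range β).dualCoannihilator.map (pc ⊤ t).subtype = pc (cl b I) t := by
    ext v
    constructor
    · rintro ⟨v, hv, rfl⟩
      refine ⟨mem_cl.2 ?_, v.2.2⟩
      have hv' : ∀ u ∈ I, u.IsHomogeneous d → u * v.1 ∈ b := by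
        intro u hu hud
        rw [← key _ (by rw [← hdt]; exact IsHomogeneous.mul hud v.2.2)]
        exact (Submodule.mem_dualCoannihilator _).1 hv _ ⟨⟨u, hu, hud⟩, rfl⟩
      have hvh : v.1.IsHomogeneous t := v.2.2
      intro u hu
      rw [← sum_homogeneousComponent u, Finset.sum_mul]
      refine Ideal.sum_mem _ fun k _ => ?_
      have hkh := homogeneousComponent_isHomogeneous k u
      have hkI := hI _ hu k
      by_cases hk : d < k
      · exact G.above (d := k + t) (by omega) (hkh.mul hvh)
      · refine G.nondeg (d - k) (k + t) _ (hkh.mul hvh) (by omega) fun z hz => ?_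
        have h5 := hv' (homogeneousComponent k u * z) (I.mul_mem_right _ hkI) (by
          have := hkh.mul hz
          rwa [show k + (d - k) = d by omega] at this)
        convert h5 using 1
        simp only [Submodule.subtype_apply]
        ring
    · intro hv
      refine ⟨⟨v, trivial, hv.2⟩, ?_, rfl⟩
      refine (Submodule.mem_dualCoannihilator _).2 ?_
      rintro _ ⟨u, rfl⟩
      rw [hβ]
      exact (key _ (by rw [← hdt]; exact IsHomogeneous.mul u.2.2 hv.2)).2
        (mem_cl.1 hv.1 _ u.2.1)
  have e1 := LinearMap.finrank_range_add_finrank_ker β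
  have e2 := Subspace.finrank_add_finrank_dualCoannihilator_eq (LinearMap.range β)
  rw [← Submodule.finrank_map_subtype_eq, hker] at e1
  rw [← Submodule.finrank_map_subtype_eq (pc ⊤ t), hco] at e2
  simp only [← hilb_eq] at e1 e2
  omega

end Gor

end

end EGH

namespace EGH

section
variable {K : Type} [Field K] {n : ℕ}

theorem sum_removeLast {r : ℕ} (a : Fin (r + 1) → ℕ) :
    ∑ i, (a i - 1) = (a (Fin.last r) - 1) + ∑ i, ((Fin.last r).removeNth a i - 1) :=
  Fin.sum_univ_succAbove _ (Fin.last r)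

theorem col_eq_self {E : Ideal (MvPolynomial (Fin n) K)} {l : MvPolynomial (Fin n) K}
    (h : ∀ u, l * u ∈ E → u ∈ E) : col E l = E :=
  le_antisymm (fun u hu => h u hu) (le_col E l)

theorem hilb_sum_E {r : ℕ} {E : Ideal (MvPolynomial (Fin n) K)} {l : MvPolynomial (Fin n) K}
    (hE : IsHomog E) (hl : l.IsHomogeneous 1) (hl0 : l ≠ 0) (hlE : ∀ u, l * u ∈ E → u ∈ E)
    {a' : Fin r → ℕ} (G : Gor (E ⊔ Ideal.span {l}) a') (d : ℕ) :
    hilb E d + ∑ j ∈ Finset.range (d + 1), (level a' (d - j)).card =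
      hilb (⊤ : Ideal (MvPolynomial (Fin n) K)) d := by
  induction d with
  | zero =>
    have h1 := G.card 0
    rw [hilb_sup_lt hE hl (by omega)] at h1
    simpa using h1
  | succ d ih =>
    have h1 := G.card (d + 1)
    have h2 := hilb_exact hE hl hl0 d
    rw [col_eq_self hlE] at h2
    rw [Finset.sum_range_succ']
    simp only [Nat.add_sub_add_right, Nat.sub_zero]
    omega

theorem step_gor {r : ℕ} {E : Ideal (MvPolynomial (Fin n) K)} {l f : MvPolynomial (Fin n) K}
    {a : Fin (r + 1) → ℕ}
    (hE : IsHomog E) (hl : l.IsHomogeneous 1) (hl0 : l ≠ 0) (hlE : ∀ u, l * u ∈ E → u ∈ E)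
    (hf : f.IsHomogeneous (a (Fin.last r))) (hf0 : f ≠ 0) (hfE : ∀ u, f * u ∈ E → u ∈ E)
    (ha : 1 ≤ a (Fin.last r))
    (G : Gor (E ⊔ Ideal.span {l}) ((Fin.last r).removeNth a)) : Gor (E ⊔ Ideal.span {f}) a where
  hom := homog_sup_span hE hf
  card d := by
    by_cases hd : d < a (Fin.last r)
    · rw [hilb_sup_lt hE hf hd, card_level_small a d hd]
      exact hilb_sum_E hE hl hl0 hlE G d
    · obtain ⟨d, rfl⟩ := Nat.exists_eq_add_of_le' (not_lt.1 hd)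
      have h1 := hilb_exact hE hf hf0 d
      rw [col_eq_self hfE] at h1
      have h2 := card_level_large a d
      have h3 := hilb_sum_E hE hl hl0 hlE G d
      have h4 := hilb_sum_E hE hl hl0 hlE G (d + a (Fin.last r))
      omega
  soc u d hu hd hX := by
    have hlu : l * u ∈ E ⊔ Ideal.span {f} := by
      have : l ∈ col (E ⊔ Ideal.span {f}) u := by
        refine mem_of_X_mem (fun i => ?_) hl one_pos
        rw [mem_col, mul_comm]
        exact hX i
      rw [mem_col, mul_comm] at this
      exact this
    have hluh : (l * u).IsHomogeneous (d + 1) := by rw [add_comm]; exact hl.mul hu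
    rw [sum_removeLast] at hd
    by_cases hda : d + 1 < a (Fin.last r)
    · exact Ideal.mem_sup_left (hlE _ (mem_sup_span_lt hE hf hluh hda hlu))
    · obtain ⟨d', hd'⟩ := Nat.exists_eq_add_of_le' (not_lt.1 hda)
      rw [hd'] at hluh
      obtain ⟨y, hy, -, v, hv, hyv⟩ := mem_sup_span_homog hE hf hluh hlu
      have hvX : ∀ i, X i * v ∈ E ⊔ Ideal.span {l} := by
        intro i
        obtain ⟨e', he', w, hw⟩ := mem_sup_span.1 (hX i)
        have h1 : f * (X i * v - l * w) = l * e' - X i * y := by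
          linear_combination (-(X i : MvPolynomial (Fin n) K)) * hyv + l * hw
        have h2 := hfE _ (h1 ▸ E.sub_mem (E.mul_mem_left _ he') (E.mul_mem_left _ hy))
        exact mem_sup_span.2 ⟨_, h2, w, by ring⟩
      obtain ⟨e, he, v', hv'⟩ := mem_sup_span.1 (G.soc v d' hv (by omega) hvX)
      have h1 : l * (u - f * v') = y + f * e := by
        rw [hv'] at hyv
        linear_combination hyv
      have h2 := hlE _ (h1 ▸ E.add_mem hy (E.mul_mem_left _ he))
      exact mem_sup_span.2 ⟨_, h2, v', by ring⟩

/-- Iterated colon ideals. -/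
noncomputable def itc (I : Ideal (MvPolynomial (Fin n) K)) (l : MvPolynomial (Fin n) K) (j : ℕ) :
    Ideal (MvPolynomial (Fin n) K) := (fun J => col J l)^[j] I

theorem itc_zero (I : Ideal (MvPolynomial (Fin n) K)) (l : MvPolynomial (Fin n) K) :
    itc I l 0 = I := rfl

theorem itc_succ (I : Ideal (MvPolynomial (Fin n) K)) (l : MvPolynomial (Fin n) K) (j : ℕ) :
    itc I l (j + 1) = itc (col I l) l j := rfl

theorem itc_succ' (I : Ideal (MvPolynomial (Fin n) K)) (l : MvPolynomial (Fin n) K) (j : ℕ) :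
    itc I l (j + 1) = col (itc I l j) l := Function.iterate_succ_apply' _ _ _

theorem le_itc (I : Ideal (MvPolynomial (Fin n) K)) (l : MvPolynomial (Fin n) K) (j : ℕ) :
    I ≤ itc I l j := by
  induction j with
  | zero => exact le_rfl
  | succ j ih => rw [itc_succ']; exact ih.trans (le_col _ _)

theorem homog_itc {I : Ideal (MvPolynomial (Fin n) K)} {l : MvPolynomial (Fin n) K}
    (hI : IsHomog I) (hl : l.IsHomogeneous 1) (j : ℕ) : IsHomog (itc I l j) := by
  induction j with
  | zero => exact hI
  | succ j ih => rw [itc_succ']; exact homog_col ih hl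

theorem hilb_itc_sum {E : Ideal (MvPolynomial (Fin n) K)} {l : MvPolynomial (Fin n) K}
    (hE : IsHomog E) (hl : l.IsHomogeneous 1) (hl0 : l ≠ 0) (hlE : ∀ u, l * u ∈ E → u ∈ E)
    (d : ℕ) : ∀ I : Ideal (MvPolynomial (Fin n) K), IsHomog I →
    hilb I d + ∑ j ∈ Finset.range (d + 1), hilb (E ⊔ Ideal.span {l}) (d - j) =
    hilb E d + ∑ j ∈ Finset.range (d + 1), hilb (itc I l j ⊔ Ideal.span {l}) (d - j) := by
  induction d with
  | zero =>
    intro I hI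
    simp only [zero_add, Finset.sum_range_one, Nat.sub_zero, itc_zero]
    rw [hilb_sup_lt hE hl (by omega), hilb_sup_lt hI hl (by omega)]
    omega
  | succ d ih =>
    intro I hI
    have h1 := ih _ (homog_col hI hl)
    have h2 := hilb_exact hE hl hl0 d
    have h3 := hilb_exact hI hl hl0 d
    rw [col_eq_self hlE] at h2
    rw [Finset.sum_range_succ' _ (d + 1), Finset.sum_range_succ'
      (fun j => hilb (itc I l j ⊔ Ideal.span {l}) (d + 1 - j)) (d + 1)]
    simp only [Nat.add_sub_add_right, Nat.sub_zero, itc_succ, itc_zero]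
    omega

theorem step_mac1 {r : ℕ} {E : Ideal (MvPolynomial (Fin n) K)} {l : MvPolynomial (Fin n) K}
    {a : Fin (r + 1) → ℕ} (hmono : Monotone a)
    (hE : IsHomog E) (hl : l.IsHomogeneous 1) (hl0 : l ≠ 0) (hlE : ∀ u, l * u ∈ E → u ∈ E)
    (G : Good (E ⊔ Ideal.span {l}) ((Fin.last r).removeNth a))
    {I : Ideal (MvPolynomial (Fin n) K)} (hI : IsHomog I) (hEI : E ≤ I) {d : ℕ}
    (hd : d + 1 < a (Fin.last r)) {L : Finset (Fin (r + 1) → ℕ)} (hL : Init a d L)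
    (hc : L.card + hilb E d = hilb I d) :
    (shad a L).card + hilb E (d + 1) ≤ hilb I (d + 1) := by
  set a' := (Fin.last r).removeNth a with ha'
  set B := E ⊔ Ideal.span {l} with hB
  set Q : ℕ → Ideal (MvPolynomial (Fin n) K) := fun j => itc I l j ⊔ Ideal.span {l} with hQ
  have hQh : ∀ j, IsHomog (Q j) := fun j => homog_sup_span (homog_itc hI hl j) hl
  have hBQ : ∀ j, B ≤ Q j := fun j => sup_le_sup_right (hEI.trans (le_itc I l j)) _
  have hQQ : ∀ j, Q j ≤ Q (j + 1) := fun j => by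
    refine sup_le_sup_right ?_ _
    rw [itc_succ']
    exact le_col _ _
  have hLe : ∀ e j, ∃ M, Init a' e M ∧ M.card + hilb B e = hilb (Q j) e := by
    intro e j
    have h1 := G.card e
    have h2 := hilb_mono (hBQ j) e
    have h3 := hilb_mono (le_top : Q j ≤ ⊤) e
    obtain ⟨M, hM, hMc⟩ := exists_init a' e (hilb (Q j) e - hilb B e) (by omega)
    exact ⟨M, hM, by omega⟩
  choose M hM hMc using hLe
  let Lf : ℕ → Finset (Fin r → ℕ) := fun j => if j ≤ d then M (d - j) j else ∅
  let V : ℕ → Finset (Fin r → ℕ) := fun j => if j ≤ d + 1 then M (d + 1 - j) j else ∅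
  have hLf : ∀ j, ∀ w ∈ Lf j, j < a (Fin.last r) ∧ j ≤ d ∧
      w ∈ level ((Fin.last r).removeNth a) (d - j) := by
    intro j w hw
    by_cases hj : j ≤ d
    · simp only [Lf, if_pos hj] at hw
      exact ⟨by omega, hj, (hM _ _).1 hw⟩
    · simp [Lf, if_neg hj] at hw
  have hsub1 : ∀ j, j < a (Fin.last r) → shad ((Fin.last r).removeNth a) (Lf j) ⊆ V j := by
    intro j _
    by_cases hj : j ≤ d
    · simp only [Lf, V, if_pos hj, if_pos (show j ≤ d + 1 by omega)]
      have h1 := G.mac (Q j) (hQh j) (hBQ j) (d - j) _ (hM (d - j) j) (hMc _ _)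
      have h2 := (hM (d - j) j).shad
      rw [show d - j + 1 = d + 1 - j by omega] at h1 h2
      have h3 := hMc (d + 1 - j) j
      exact h2.subset_of_card (hM _ _) (by omega)
    · simp only [Lf, if_neg hj]
      intro z hz
      obtain ⟨_, u, hu, _⟩ := mem_shad.1 hz
      simp at hu
  have hsub2 : ∀ j, j + 1 < a (Fin.last r) → Lf j ⊆ V (j + 1) := by
    intro j _
    by_cases hj : j ≤ d
    · simp only [Lf, V, if_pos hj, if_pos (show j + 1 ≤ d + 1 by omega), Nat.add_sub_add_right]
      refine (hM _ _).subset_of_card (hM _ _) ?_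
      have h1 := hMc (d - j) j
      have h2 := hMc (d - j) (j + 1)
      have h3 := hilb_mono (hQQ j) (d - j)
      omega
    · simp [Lf, if_neg hj]
  have hsl := card_shad_stack_le hLf hsub1 hsub2
  have hs := card_stack hLf
  have hs1 : ∑ j ∈ Finset.range (a (Fin.last r)), (Lf j).card =
      ∑ j ∈ Finset.range (d + 1), (M (d - j) j).card := by
    rw [← Finset.sum_subset (Finset.range_subset_range.2 (show d + 1 ≤ a (Fin.last r) by omega))]
    · refine Finset.sum_congr rfl fun j hj => ?_
      rw [Finset.mem_range] at hj
      simp only [Lf, if_pos (show j ≤ d by omega)]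
    · intro j _ hj
      rw [Finset.mem_range] at hj
      simp only [Lf, if_neg (show ¬ j ≤ d by omega), Finset.card_empty]
  have hs2 : ∑ j ∈ Finset.range (a (Fin.last r)), (V j).card =
      ∑ j ∈ Finset.range (d + 1 + 1), (M (d + 1 - j) j).card := by
    rw [← Finset.sum_subset (Finset.range_subset_range.2
      (show d + 1 + 1 ≤ a (Fin.last r) by omega))]
    · refine Finset.sum_congr rfl fun j hj => ?_
      rw [Finset.mem_range] at hj
      simp only [V, if_pos (show j ≤ d + 1 by omega)]
    · intro j _ hj
      rw [Finset.mem_range] at hj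
      simp only [V, if_neg (show ¬ j ≤ d + 1 by omega), Finset.card_empty]
  have hMsum : ∀ e, hilb I e = hilb E e + ∑ j ∈ Finset.range (e + 1), (M (e - j) j).card := by
    intro e
    have h1 := hilb_itc_sum hE hl hl0 hlE e I hI
    have h2 : ∑ j ∈ Finset.range (e + 1), hilb (itc I l j ⊔ Ideal.span {l}) (e - j) =
      ∑ j ∈ Finset.range (e + 1), (M (e - j) j).card +
      ∑ j ∈ Finset.range (e + 1), hilb (E ⊔ Ideal.span {l}) (e - j) := by
      rw [← Finset.sum_add_distrib]
      exact Finset.sum_congr rfl fun j _ => (hMc (e - j) j).symm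
    omega
  have h1 := hMsum d
  have h2 := hMsum (d + 1)
  have hCL := CL_all _ a hmono d (stack a d (Fin.last r) Lf) L (Finset.filter_subset _ _) hL
    (by omega)
  omega

theorem step_good {r : ℕ} {E : Ideal (MvPolynomial (Fin n) K)} {l f : MvPolynomial (Fin n) K}
    {a : Fin (r + 1) → ℕ} (hmono : Monotone a) (ha : ∀ i, 1 ≤ a i)
    (hgr : ∑ i, ((Fin.last r).removeNth a i - 1) < a (Fin.last r))
    (hE : IsHomog E) (hl : l.IsHomogeneous 1) (hl0 : l ≠ 0) (hlE : ∀ u, l * u ∈ E → u ∈ E)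
    (hf : f.IsHomogeneous (a (Fin.last r))) (hf0 : f ≠ 0) (hfE : ∀ u, f * u ∈ E → u ∈ E)
    (G : Good (E ⊔ Ideal.span {l}) ((Fin.last r).removeNth a)) :
    Good (E ⊔ Ideal.span {f}) a := by
  have H := step_gor hE hl hl0 hlE hf hf0 hfE (ha _) G.toGor
  refine ⟨H, ?_⟩
  have case1 : ∀ I : Ideal (MvPolynomial (Fin n) K), IsHomog I → E ⊔ Ideal.span {f} ≤ I → ∀ d L,
      d + 1 < a (Fin.last r) → Init a d L → L.card + hilb (E ⊔ Ideal.span {f}) d = hilb I d →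
      (shad a L).card + hilb (E ⊔ Ideal.span {f}) (d + 1) ≤ hilb I (d + 1) := by
    intro I hI hbI d L hd hL hc
    rw [hilb_sup_lt hE hf (by omega)] at hc ⊢
    exact step_mac1 hmono hE hl hl0 hlE G hI (le_sup_left.trans hbI) hd hL hc
  set b := E ⊔ Ideal.span {f} with hb
  intro I hI hbI d L hL hc
  by_cases hd : d + 1 < a (Fin.last r)
  · exact case1 I hI hbI d L hd hL hc
  have hm := hilb_mono hbI (d + 1)
  have hss := sum_removeLast a
  by_cases hs : ∑ i, (a i - 1) < d + 1
  · have h1 := shad_subset_level hL.1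
    rw [card_level_above hs, Finset.subset_empty] at h1
    rw [h1, Finset.card_empty]
    omega
  · obtain ⟨t, ht⟩ := Nat.exists_eq_add_of_le (not_lt.1 hs)
    have c1 := H.card (d + 1)
    have c2 := H.card d
    have c3 := H.card t
    have c4 := H.card (t + 1)
    have hm2 := hilb_mono (le_top : I ≤ ⊤) (d + 1)
    have key := dual_comb ht.symm hL (hilb I (d + 1) - hilb b (d + 1)) (by omega) (by
      intro M' hM' hM'c
      have r1 := card_level_rev (a := a) (d := d + 1) (t := t) ht.symm
      have r2 := card_level_rev (a := a) (d := d) (t := t + 1) (by omega)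
      have d1 := H.duality ha hI hbI (d := d + 1) (t := t) ht.symm
      have d2 := H.duality ha hI hbI (d := d) (t := t + 1) (by omega)
      have m1 := case1 (cl b I) (homog_cl H.hom hI) (le_cl b I) t M' (by omega) hM' (by omega)
      omega)
    omega

end

end EGH

namespace EGH

section
variable {K : Type} [Field K] {n : ℕ}

theorem exists_linear [Infinite K] {ι : Type} [Finite ι] (E : ι → Ideal (MvPolynomial (Fin n) K))
    (g : ι → MvPolynomial (Fin n) K) (e : ι → ℕ) (hg : ∀ i, (g i).IsHomogeneous (e i))
    (he : ∀ i, 0 < e i) (hgE : ∀ i u, g i * u ∈ E i → u ∈ E i) :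
    ∃ l : MvPolynomial (Fin n) K, l.IsHomogeneous 1 ∧ ∀ i u, l * u ∈ E i → u ∈ E i := by
  let φ : (Fin n → K) →ₗ[K] MvPolynomial (Fin n) K :=
    Fintype.linearCombination K (fun i => (X i : MvPolynomial (Fin n) K))
  let T := Σ i, ↥(associatedPrimes (MvPolynomial (Fin n) K) (MvPolynomial (Fin n) K ⧸ E i))
  have hfin : ∀ i, Finite ↥(associatedPrimes (MvPolynomial (Fin n) K)
      (MvPolynomial (Fin n) K ⧸ E i)) := fun i => (associatedPrimes.finite _ _).to_subtype
  have : Finite T := inferInstance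
  let p : T → Subspace K (Fin n → K) := fun x => (Submodule.restrictScalars K x.2.1).comap φ
  have hne : ⋃ x, (p x : Set (Fin n → K)) ≠ Set.univ := by
    intro hcov
    obtain ⟨⟨i, P, hP⟩, hx⟩ := Subspace.exists_eq_top_of_iUnion_eq_univ hcov
    have hX : ∀ k, X k ∈ P := by
      intro k
      have h1 : (Pi.single k 1 : Fin n → K) ∈ p ⟨i, P, hP⟩ := by rw [hx]; trivial
      have h2 : φ (Pi.single k 1) ∈ P := h1
      rw [Fintype.linearCombination_apply_single, one_smul] at h2
      exact h2
    have hgP : g i ∈ P := mem_of_X_mem hX (hg i) (he i)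
    have h3 : g i ∈ ⋃ q ∈ associatedPrimes (MvPolynomial (Fin n) K) (MvPolynomial (Fin n) K ⧸ E i),
        (q : Set (MvPolynomial (Fin n) K)) := Set.mem_biUnion hP hgP
    rw [biUnion_associatedPrimes_eq_zero_divisors] at h3
    obtain ⟨x, hx0, hx1⟩ := h3
    obtain ⟨u, rfl⟩ := Ideal.Quotient.mk_surjective x
    apply hx0
    rw [Ideal.Quotient.eq_zero_iff_mem]
    apply hgE i u
    rw [← Ideal.Quotient.eq_zero_iff_mem]
    exact hx1
  obtain ⟨c, hc⟩ := (Set.ne_univ_iff_exists_notMem _).1 hne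
  refine ⟨φ c, ?_, fun i u hu => ?_⟩
  · rw [Fintype.linearCombination_apply]
    refine IsHomogeneous.sum _ _ _ fun k _ => ?_
    rw [smul_eq_C_mul]
    simpa using (isHomogeneous_C (Fin n) (c k)).mul (isHomogeneous_X K k)
  · by_contra hu'
    apply hc
    have h3 : φ c ∈ ⋃ q ∈ associatedPrimes (MvPolynomial (Fin n) K) (MvPolynomial (Fin n) K ⧸ E i),
        (q : Set (MvPolynomial (Fin n) K)) := by
      rw [biUnion_associatedPrimes_eq_zero_divisors]
      refine ⟨Ideal.Quotient.mk _ u, ?_, ?_⟩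
      · rwa [Ne, Ideal.Quotient.eq_zero_iff_mem]
      · rw [← Ideal.Quotient.eq_zero_iff_mem] at hu
        exact hu
    obtain ⟨P, hP, hcP⟩ := Set.mem_iUnion₂.1 h3
    exact Set.mem_iUnion.2 ⟨⟨i, P, hP⟩, hcP⟩

theorem hilb_zero_of {b : Ideal (MvPolynomial (Fin n) K)} (hb : ∀ x ∈ b, constantCoeff x = 0) :
    hilb b 0 = 0 := by
  have : pc b 0 = ⊥ := by
    rw [eq_bot_iff]
    intro x hx
    have h1 := hb x hx.1
    have h2 := hc_self (show x.IsHomogeneous 0 from hx.2)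
    rw [homogeneousComponent_zero] at h2
    rw [Submodule.mem_bot, ← h2]
    rw [constantCoeff_eq] at h1
    rw [h1, C_0]
  rw [hilb_eq, this, finrank_bot]

theorem hilb_top_zero : hilb (⊤ : Ideal (MvPolynomial (Fin n) K)) 0 = 1 := by
  rw [hilb_eq, finrank_eq_one_iff']
  refine ⟨⟨1, trivial, isHomogeneous_one _ _⟩, ?_, ?_⟩
  · intro h
    exact one_ne_zero (congrArg Subtype.val h)
  · rintro ⟨w, hw⟩
    refine ⟨coeff 0 w, Subtype.ext ?_⟩
    have h2 := hc_self (show w.IsHomogeneous 0 from hw.2)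
    rw [homogeneousComponent_zero] at h2
    change coeff 0 w • (1 : MvPolynomial (Fin n) K) = w
    rw [smul_eq_C_mul, mul_one, h2]

theorem hilb_top_one : hilb (⊤ : Ideal (MvPolynomial (Fin n) K)) 1 ≤ n := by
  let φ : (Fin n → K) →ₗ[K] MvPolynomial (Fin n) K :=
    Fintype.linearCombination K (fun i => (X i : MvPolynomial (Fin n) K))
  have h1 : pc (⊤ : Ideal (MvPolynomial (Fin n) K)) 1 ≤ LinearMap.range φ := by
    rintro x ⟨-, hx⟩
    rw [x.as_sum]
    refine Submodule.sum_mem _ fun s hs => ?_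
    have h2 : s.degree = 1 := by
      have := hx (mem_support_iff.1 hs)
      rw [Finsupp.degree_eq_weight_one]
      exact this
    rw [Finsupp.degree_eq_sum] at h2
    obtain ⟨i, rfl⟩ : ∃ i, s = Finsupp.single i 1 := by
      obtain ⟨i, hi⟩ : ∃ i, s i ≠ 0 := by
        by_contra hc
        push Not at hc
        simp [hc] at h2
      have h3 := Finset.add_sum_erase Finset.univ (fun j => s j) (Finset.mem_univ i)
      refine ⟨i, Finsupp.ext fun j => ?_⟩
      by_cases hj : j = i
      · subst hj
        rw [Finsupp.single_eq_same]
        omega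
      · rw [Finsupp.single_eq_of_ne hj]
        have h4 : s j ≤ ∑ j ∈ Finset.univ.erase i, s j :=
          Finset.single_le_sum (f := fun j => s j) (fun _ _ => Nat.zero_le _)
            (Finset.mem_erase.2 ⟨hj, Finset.mem_univ _⟩)
        omega
    refine ⟨Pi.single i (coeff (Finsupp.single i 1) x), ?_⟩
    rw [Fintype.linearCombination_apply_single, X, smul_monomial, smul_eq_mul, mul_one]
  have h2 := Submodule.finrank_mono h1
  have h3 := LinearMap.finrank_range_le φ
  rw [Module.finrank_fin_fun] at h3
  exact h2.trans h3

theorem good_base {a : Fin 0 → ℕ} {b : Ideal (MvPolynomial (Fin n) K)} (hb : IsHomog b)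
    (hb0 : ∀ x ∈ b, constantCoeff x = 0) (hn : n ≤ hilb b 1) : Good b a := by
  have hX : ∀ i, X i ∈ b := fun i =>
    pc_eq_of_hilb (J := ⊤) le_top (hilb_top_one.trans hn) trivial (isHomogeneous_X K i)
  refine ⟨⟨hb, ?_, ?_⟩, ?_⟩
  · intro d
    rcases Nat.eq_zero_or_pos d with rfl | hd
    · have h1 := card_level_top (a := a) (fun i => i.elim0)
      simp only [Finset.univ_eq_empty, Finset.sum_empty] at h1
      rw [h1, hilb_zero_of hb0, hilb_top_zero]
    · rw [card_level_above (by simpa using hd), Finset.card_empty, add_zero]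
      refine le_antisymm (hilb_mono le_top d) ?_
      exact Submodule.finrank_mono (fun x hx => ⟨mem_of_X_mem hX hx.2 hd, hx.2⟩ :
        pc ⊤ d ≤ pc b d)
  · intro u d _ hd
    simp at hd
  · intro I _ hbI d L _ _
    have : shad a L = ∅ := by
      rw [Finset.eq_empty_iff_forall_notMem]
      intro z hz
      obtain ⟨_, u, _, i, _⟩ := mem_shad.1 hz
      exact i.elim0
    rw [this, Finset.card_empty, zero_add]
    exact hilb_mono hbI _

theorem cc_sup_span {b : Ideal (MvPolynomial (Fin n) K)} {l : MvPolynomial (Fin n) K} {e : ℕ}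
    (hb : ∀ x ∈ b, constantCoeff x = 0) (hl : l.IsHomogeneous e) (he : 0 < e) :
    ∀ x ∈ b ⊔ Ideal.span {l}, constantCoeff x = 0 := by
  intro x hx
  obtain ⟨y, hy, v, rfl⟩ := mem_sup_span.1 hx
  have : constantCoeff l = 0 := by
    rw [constantCoeff_eq]
    refine hl.coeff_eq_zero ?_
    simp
    omega
  rw [map_add, map_mul, hb y hy, this, zero_mul, add_zero]

/-- partial ideals -/
noncomputable def EE {r : ℕ} (b : Ideal (MvPolynomial (Fin n) K))
    (f : Fin r → MvPolynomial (Fin n) K)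
    (k : ℕ) : Ideal (MvPolynomial (Fin n) K) := b ⊔ Ideal.span (f '' {j | j.1 < k})

theorem EE_zero {r : ℕ} (b : Ideal (MvPolynomial (Fin n) K)) (f : Fin r → MvPolynomial (Fin n) K) :
    EE b f 0 = b := by simp [EE]

theorem EE_succ {r : ℕ} (b : Ideal (MvPolynomial (Fin n) K)) (f : Fin r → MvPolynomial (Fin n) K)
    (i : Fin r) : EE b f (i.1 + 1) = EE b f i.1 ⊔ Ideal.span {f i} := by
  have : f '' {j | j.1 < i.1 + 1} = f '' {j | j.1 < i.1} ∪ {f i} := by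
    rw [← Set.image_singleton, ← Set.image_union]
    congr 1
    ext j
    simp only [Set.mem_ofPred_eq, Set.mem_union, Set.mem_singleton_iff, Fin.ext_iff]
    omega
  rw [EE, EE, this, Ideal.span_union, sup_assoc]

theorem EE_last {r : ℕ} (b : Ideal (MvPolynomial (Fin n) K)) (f : Fin r → MvPolynomial (Fin n) K) :
    EE b f r = b ⊔ Ideal.span (Set.range f) := by
  have : {j : Fin r | j.1 < r} = Set.univ := Set.eq_univ_of_forall fun j => j.2
  rw [EE, this, Set.image_univ]

theorem EE_sup {r : ℕ} (b : Ideal (MvPolynomial (Fin n) K)) (f : Fin r → MvPolynomial (Fin n) K)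
    (l : MvPolynomial (Fin n) K) (k : ℕ) :
    EE (b ⊔ Ideal.span {l}) f k = EE b f k ⊔ Ideal.span {l} := by
  rw [EE, EE, sup_right_comm]

theorem EE_init {r : ℕ} (b : Ideal (MvPolynomial (Fin n) K))
    (f : Fin (r + 1) → MvPolynomial (Fin n) K) (k : ℕ) (hk : k ≤ r) :
    EE b (fun i : Fin r => f i.castSucc) k = EE b f k := by
  have : (fun i : Fin r => f i.castSucc) '' {j | j.1 < k} = f '' {j | j.1 < k} := by
    ext x
    constructor
    · rintro ⟨j, hj, rfl⟩
      exact ⟨j.castSucc, hj, rfl⟩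
    · rintro ⟨j, hj, rfl⟩
      have hj' : j.1 < k := hj
      exact ⟨⟨j.1, by omega⟩, hj, rfl⟩
  rw [EE, EE, this]

theorem EE_props {r : ℕ} {b : Ideal (MvPolynomial (Fin n) K)} {f : Fin r → MvPolynomial (Fin n) K}
    {a : Fin r → ℕ} (ha : ∀ i, 1 ≤ a i) (hf : ∀ i, (f i).IsHomogeneous (a i)) (hb : IsHomog b)
    (hb0 : ∀ x ∈ b, constantCoeff x = 0) (k : ℕ) (hk : k ≤ r) :
    IsHomog (EE b f k) ∧ ∀ x ∈ EE b f k, constantCoeff x = 0 := by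
  induction k with
  | zero => rw [EE_zero]; exact ⟨hb, hb0⟩
  | succ k ih =>
    have ih := ih (by omega)
    have := EE_succ b f ⟨k, hk⟩
    simp only at this
    rw [this]
    exact ⟨homog_sup_span ih.1 (hf _), cc_sup_span ih.2 (hf _) (ha _)⟩

theorem main_ind [Infinite K] : ∀ (r : ℕ) (a : Fin r → ℕ) (b : Ideal (MvPolynomial (Fin n) K))
    (f : Fin r → MvPolynomial (Fin n) K), Monotone a → (∀ i, 1 ≤ a i) →
    (∀ j : Fin r, ∑ i ∈ Finset.univ.filter (· < j), (a i - 1) < a j) → IsHomog b →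
    (∀ x ∈ b, constantCoeff x = 0) → (∀ i, (f i).IsHomogeneous (a i)) →
    (∀ i u, f i * u ∈ EE b f i.1 → u ∈ EE b f i.1) → n ≤ hilb b 1 + r →
    Good (EE b f r) a := by
  intro r
  induction r with
  | zero =>
    intro a b f _ _ _ hb hb0 _ _ hn
    rw [EE_zero]
    exact good_base hb hb0 hn
  | succ r ih =>
    intro a b f hmono ha hgr hb hb0 hf hreg hn
    obtain ⟨l, hl, hlE⟩ := exists_linear (fun i : Fin (r + 1) => EE b f i.1) f a hf ha hreg
    have hE := fun k hk => EE_props (k := k) ha hf hb hb0 hk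
    have hne : ∀ k, k ≤ r + 1 → ∀ x : MvPolynomial (Fin n) K,
        (∀ u, x * u ∈ EE b f k → u ∈ EE b f k) → x ≠ 0 := by
      rintro k hk x hx rfl
      have := (hE k hk).2 1 (hx 1 (by simp))
      simp at this
    have hl0 : l ≠ 0 := hne 0 (by omega) l (hlE 0)
    have hrem : (Fin.last r).removeNth a = fun i => a i.castSucc := by
      funext i
      simp [Fin.removeNth]
    have hlb := hlE 0
    simp only [Fin.val_zero, EE_zero] at hlb
    have G := ih (fun i => a i.castSucc) (b ⊔ Ideal.span {l}) (fun i => f i.castSucc)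
      (fun i j hij => hmono (by simpa using hij)) (fun i => ha _) (fun j => by
        have h1 := hgr j.castSucc
        rw [Finset.sum_filter, Fin.sum_univ_castSucc] at h1
        rw [Finset.sum_filter]
        simp only [Fin.castSucc_lt_castSucc_iff] at h1
        omega) (homog_sup_span hb hl) (cc_sup_span hb0 hl one_pos) (fun i => hf _) (by
        intro i u hu
        rw [EE_init _ _ _ (by omega), EE_sup] at hu ⊢
        obtain ⟨e, he, v, hv⟩ := mem_sup_span.1 hu
        have h2 : EE b f (i.1 + 1) = _ := EE_succ b f i.castSucc
        have h1 : v ∈ EE b f (i.1 + 1) := by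
          have := hlE i.succ v
          simp only [Fin.val_succ] at this
          apply this
          rw [h2]
          exact mem_sup_span.2 ⟨-e, Ideal.neg_mem_iff _ |>.2 he, u, by rw [hv]; ring⟩
        rw [h2] at h1
        obtain ⟨e', he', w, rfl⟩ := mem_sup_span.1 h1
        have h3 : f i.castSucc * (u - l * w) = e + l * e' := by linear_combination hv
        have h4 := hreg i.castSucc (u - l * w) (by
          rw [h3]
          exact Ideal.add_mem _ he (Ideal.mul_mem_left _ _ he'))
        exact mem_sup_span.2 ⟨_, h4, w, by ring⟩) (by
        have h1 := hilb_exact hb hl hl0 0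
        rw [col_eq_self hlb, hilb_zero_of hb0, hilb_top_zero] at h1
        simp only [zero_add] at h1
        omega)
    rw [EE_init _ _ _ le_rfl, EE_sup, ← hrem] at G
    have hfin : EE b f (r + 1) = _ := EE_succ b f (Fin.last r)
    rw [hfin]
    refine step_good hmono ha ?_ (hE r (by omega)).1 hl hl0 (hlE (Fin.last r)) (hf _)
      (hne r (by omega) _ (hreg (Fin.last r))) (hreg (Fin.last r)) G
    have h1 := hgr (Fin.last r)
    rw [Finset.sum_filter, Fin.sum_univ_castSucc] at h1
    simp only [Fin.castSucc_lt_last, if_true, lt_irrefl, if_false, add_zero] at h1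
    rw [hrem]
    exact h1

end

end EGH

namespace EGH

section
variable {K : Type} [Field K] {n : ℕ}

theorem hilb_mon {I : Ideal (MvPolynomial (Fin n) K)} {T : Set (Fin n →₀ ℕ)}
    (hT : ∀ x, x ∈ I ↔ ∀ u ∈ x.support, u ∈ T) (d : ℕ) :
    hilb I d = {u | u ∈ T ∧ u.degree = d}.ncard := by
  have : pc I d = restrictSupport K {u | u ∈ T ∧ u.degree = d} := by
    ext x
    rw [mem_pc, mem_restrictSupport_iff, hT]
    constructor
    · rintro ⟨h1, h2⟩ u hu
      refine ⟨h1 u hu, ?_⟩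
      rw [Finsupp.degree_eq_weight_one]
      exact h2 (mem_support_iff.1 hu)
    · intro h
      refine ⟨fun u hu => (h hu).1, fun u hu => ?_⟩
      have := (h (mem_support_iff.2 hu)).2
      rwa [Finsupp.degree_eq_weight_one] at this
  rw [hilb_eq, this, Module.finrank_eq_nat_card_basis (basisRestrictSupport K _)]
  rfl

theorem up_chain {a : Fin n → ℕ} {L : ℕ → Finset (Fin n → ℕ)}
    (hL : ∀ d, shad a (L d) ⊆ L (d + 1)) : ∀ (k : ℕ) (u v : Fin n → ℕ), u ∈ L (∑ i, u i) →
    (∀ i, u i ≤ v i) → (∀ i, v i < a i) → ∑ i, v i = ∑ i, u i + k → v ∈ L (∑ i, v i) := by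
  intro k
  induction k with
  | zero =>
    intro u v hu huv _ hk
    have : u = v := by
      funext i
      by_contra hne
      have : ∑ i, u i < ∑ i, v i := Finset.sum_lt_sum (fun i _ => huv i)
        ⟨i, Finset.mem_univ _, lt_of_le_of_ne (huv i) hne⟩
      omega
    rw [← this]
    exact hu
  | succ k ih =>
    intro u v hu huv hv hk
    obtain ⟨i, hi⟩ : ∃ i, u i < v i := by
      by_contra hc
      push Not at hc
      have := Finset.sum_le_sum (s := Finset.univ) (fun i _ => hc i)
      omega
    have hs : ∑ j, (u + Pi.single i 1 : Fin n → ℕ) j = ∑ j, u j + 1 := by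
      simp [Finset.sum_add_distrib]
    have hle : ∀ j, (u + Pi.single i 1 : Fin n → ℕ) j ≤ v j := by
      intro j
      by_cases hj : j = i
      · subst hj; simpa using hi
      · simpa [hj] using huv j
    refine ih (u + Pi.single i 1) v ?_ hle hv (by omega)
    rw [hs]
    exact hL _ (mem_shad.2 ⟨fun j => lt_of_le_of_lt (hle j) (hv j), u, hu, i, rfl⟩)

theorem final {a : Fin n → ℕ} {b I : Ideal (MvPolynomial (Fin n) K)} (G : Good b a)
    (hI : IsHomog I) (hbI : b ≤ I) :
    ∃ J : Ideal (MvPolynomial (Fin n) K), (∀ i, X i ^ a i ∈ J) ∧ ∀ d, hilb I d = hilb J d := by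
  have hex : ∀ d, ∃ M, Init a d M ∧ M.card + hilb b d = hilb I d := by
    intro d
    have h1 := G.card d
    have h2 := hilb_mono hbI d
    have h3 := hilb_mono (le_top : I ≤ ⊤) d
    obtain ⟨M, hM, hMc⟩ := exists_init a d (hilb I d - hilb b d) (by omega)
    exact ⟨M, hM, by omega⟩
  choose L hL hLc using hex
  have hsh : ∀ d, shad a (L d) ⊆ L (d + 1) := by
    intro d
    refine (hL d).shad.subset_of_card (hL (d + 1)) ?_
    have h1 := G.mac I hI hbI d _ (hL d) (hLc d)
    have h2 := hLc (d + 1)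
    omega
  let T : Set (Fin n →₀ ℕ) := {u | (∀ i, u i < a i) → ⇑u ∈ L (∑ i, u i)}
  have hTup : ∀ u v, u ∈ T → u ≤ v → v ∈ T := by
    intro u v hu huv hv
    have hle : ∀ i, u i ≤ v i := fun i => huv i
    have hsum : ∑ i, u i ≤ ∑ i, v i := Finset.sum_le_sum fun i _ => hle i
    exact up_chain hsh (∑ i, v i - ∑ i, u i) u v
      (hu fun i => lt_of_le_of_lt (hle i) (hv i)) hle hv (by omega)
  let J : Ideal (MvPolynomial (Fin n) K) := Ideal.span ((fun u => monomial u (1 : K)) '' T)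
  have hJ : ∀ x, x ∈ J ↔ ∀ u ∈ x.support, u ∈ T := by
    intro x
    rw [mem_ideal_span_monomial_image]
    constructor
    · intro h u hu
      obtain ⟨s, hs, hsu⟩ := h u hu
      exact hTup s u hs hsu
    · intro h u hu
      exact ⟨u, h u hu, le_rfl⟩
  refine ⟨J, fun i => ?_, fun d => ?_⟩
  · rw [X_pow_eq_monomial]
    refine Ideal.subset_span ⟨_, ?_, rfl⟩
    intro h
    have := h i
    simp at this
  · have e1 := hilb_mon hJ d
    have e2 := hilb_mon (I := (⊤ : Ideal (MvPolynomial (Fin n) K))) (T := Set.univ)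
      (fun x => by simp) d
    have hfin : {u : Fin n →₀ ℕ | u.degree = d}.Finite :=
      (Finsupp.finite_of_degree_le d).subset fun u hu => le_of_eq hu
    have e3 : {u | u ∈ (Set.univ : Set (Fin n →₀ ℕ)) ∧ u.degree = d} =
        {u | u ∈ T ∧ u.degree = d} ∪ {u | u ∉ T ∧ u.degree = d} := by
      ext u
      simp only [Set.mem_ofPred_eq, Set.mem_union, Set.mem_univ, true_and]
      tauto
    have e4 : ({u | u ∉ T ∧ u.degree = d} : Set (Fin n →₀ ℕ)).ncard =
        (level a d \ L d).card := by
      rw [← Set.ncard_image_of_injective (f := fun u : Fin n →₀ ℕ => (⇑u : Fin n → ℕ)) _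
        DFunLike.coe_injective, ← Set.ncard_coe_finset]
      congr 1
      ext w
      simp only [Set.mem_image, Set.mem_ofPred_eq, Finset.coe_sdiff, Set.mem_sdiff, Finset.mem_coe,
        mem_level, T, Finsupp.degree_eq_sum, Classical.not_imp]
      constructor
      · rintro ⟨u, ⟨⟨h1, h2⟩, h3⟩, rfl⟩
        rw [h3] at h2
        exact ⟨⟨h1, h3⟩, h2⟩
      · rintro ⟨⟨h1, h3⟩, h2⟩
        refine ⟨Finsupp.equivFunOnFinite.symm w, ⟨⟨?_, ?_⟩, ?_⟩, ?_⟩ <;>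
          simp_all
    rw [e3, Set.ncard_union_eq (by
      rw [Set.disjoint_left]
      exact fun u h1 h2 => h2.1 h1.1) (hfin.subset fun u hu => hu.2)
      (hfin.subset fun u hu => hu.2), e4] at e2
    have h5 := Finset.card_sdiff_add_card_eq_card (hL d).1
    have h6 := G.card d
    have h7 := hLc d
    omega

end

end EGH

/-- the Eisenbud–Green–Harris conjecture `EGH_{a,n}` holds when
`a_j > Σ_{i<j} (a_i − 1)` for all `j`. -/
theorem stmt11 {K : Type} [Field K] [Infinite K] {n : ℕ} (a : Fin n → ℕ)
    (ha2 : ∀ i, 2 ≤ a i) (hmono : Monotone a)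
    (hgrowth : ∀ j : Fin n, ∑ i ∈ Finset.univ.filter (· < j), (a i - 1) < a j) :
    EGHnr K n n le_rfl a := by
  rintro I hI ⟨f, ⟨-, hreg⟩, hf, hfI⟩
  have hEE : ∀ i : Fin n, EGH.EE (⊥ : Ideal (MvPolynomial (Fin n) K)) f i.1 =
      Ideal.span (f '' {j : Fin n | j < i}) := by
    intro i
    rw [EGH.EE, bot_sup_eq]
    rfl
  have G := EGH.main_ind n a ⊥ f hmono (fun i => le_trans (by norm_num) (ha2 i)) hgrowth
    (fun x hx d => by
      rw [Ideal.mem_bot] at hx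
      rw [hx, map_zero]
      exact Ideal.zero_mem _)
    (fun x hx => by rw [Ideal.mem_bot] at hx; rw [hx, map_zero]) hf
    (fun i u hu => by rw [hEE] at hu ⊢; exact hreg i u hu) (by omega)
  rw [EGH.EE_last, bot_sup_eq] at G
  exact EGH.final G hI (Ideal.span_le.2 (by rintro _ ⟨i, rfl⟩; exact hfI i))
end

section
/- The Eisenbud–Green–Harris conjecture holds for n = 2: for any 2 ≤ a_1 ≤ a_2, every homogeneous ideal of k[x,y] containing a homogeneous regular sequence f_1, f_2 of degrees a_1, a_2 has the same Hilbert function as an ideal containing x^{a_1} and y^{a_2}. -/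
open MvPolynomial

section helpers
variable {K : Type} [Field K]

local notation "S" => MvPolynomial (Fin 2) K
local notation "H" => homogeneousSubmodule (Fin 2) K

/-- multiplication by `g` as a linear map -/
noncomputable def mulBy (g : MvPolynomial (Fin 2) K) :
    MvPolynomial (Fin 2) K →ₗ[K] MvPolynomial (Fin 2) K := LinearMap.mulLeft K g

lemma mulBy_apply (g p : S) : mulBy g p = g * p := rfl

lemma mulBy_inj {g : S} (hg : g ≠ 0) : Function.Injective (mulBy g) := by
  intro p q h
  exact mul_left_cancel₀ hg h

lemma finrank_mulBy {g : S} (hg : g ≠ 0) (V : Submodule K S) :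
    Module.finrank K (V.map (mulBy g)) = Module.finrank K V :=
  (Submodule.equivMapOfInjective (mulBy g) (mulBy_inj hg) V).finrank_eq.symm

lemma homog_of_X_mul (i : Fin 2) {p : S} {d : ℕ} (h : (X i * p).IsHomogeneous (d + 1)) :
    p.IsHomogeneous d := by
  intro m hm
  have h1 : coeff (Finsupp.single i 1 + m) (X i * p) ≠ 0 := by
    rwa [coeff_X_mul]
  have h2 := h h1
  rw [map_add] at h2
  rw [Finsupp.weight_single] at h2
  simp only [Pi.one_apply, smul_eq_mul, mul_one] at h2
  omega

lemma not_X0_dvd_X1 : ¬ (X 0 : S) ∣ X 1 := by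
  rw [X_dvd_X]; decide

lemma finite_of_le {d : ℕ} {V : Submodule K S} (hV : V ≤ H d) : Module.Finite K V := by
  have : Module.Finite K (H d) := Module.Finite.iff_fg.2 (homogeneousSubmodule_fg _ _ d)
  exact Submodule.finiteDimensional_of_le hV

lemma finrank_pos_of_ne_bot {V : Submodule K S} [Module.Finite K V] (h : V ≠ ⊥) :
    0 < Module.finrank K V :=
  Nat.pos_of_ne_zero fun h0 => h (Submodule.finrank_eq_zero.1 h0)

/-- the span of `S_1 V` -/
noncomputable def up (V : Submodule K (MvPolynomial (Fin 2) K)) :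
    Submodule K (MvPolynomial (Fin 2) K) := V.map (mulBy (X 0)) ⊔ V.map (mulBy (X 1))

/-- the colon `V : S_1` -/
noncomputable def down (V : Submodule K (MvPolynomial (Fin 2) K)) :
    Submodule K (MvPolynomial (Fin 2) K) := V.comap (mulBy (X 0)) ⊓ V.comap (mulBy (X 1))

lemma up_le_iff (V W : Submodule K S) :
    up V ≤ W ↔ ∀ p ∈ V, X 0 * p ∈ W ∧ X 1 * p ∈ W := by
  rw [up, sup_le_iff, Submodule.map_le_iff_le_comap, Submodule.map_le_iff_le_comap]
  exact ⟨fun h p hp => ⟨h.1 hp, h.2 hp⟩, fun h => ⟨fun p hp => (h p hp).1, fun p hp => (h p hp).2⟩⟩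

lemma up_homog {d : ℕ} {V : Submodule K S} (hV : V ≤ H d) : up V ≤ H (d + 1) := by
  rw [up_le_iff]
  intro p hp
  have := hV hp
  rw [mem_homogeneousSubmodule] at this
  simp only [mem_homogeneousSubmodule]
  rw [add_comm]
  exact ⟨(isHomogeneous_X K 0).mul this, (isHomogeneous_X K 1).mul this⟩

lemma up_down_le (V : Submodule K S) : up (down V) ≤ V := by
  rw [up_le_iff]
  intro p hp
  exact hp

lemma down_homog {d : ℕ} {V : Submodule K S} (hV : V ≤ H (d + 1)) : down V ≤ H d := by
  intro p hp
  exact homog_of_X_mul 0 (hV hp.1)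

lemma down_zero {V : Submodule K S} (hV : V ≤ H 0) : down V = ⊥ := by
  rw [eq_bot_iff]
  intro p hp
  have h1 : (X 0 * p : S).IsHomogeneous 0 := hV hp.1
  rw [Submodule.mem_bot]
  ext m
  have := h1.coeff_eq_zero (d := Finsupp.single 0 1 + m) (by simp)
  rwa [coeff_X_mul] at this

lemma map_down (V : Submodule K S) :
    (down V).map (mulBy (X 0 * X 1)) = V.map (mulBy (X 0)) ⊓ V.map (mulBy (X 1)) := by
  apply le_antisymm
  · rintro _ ⟨p, hp, rfl⟩
    refine ⟨⟨X 1 * p, hp.2, ?_⟩, ⟨X 0 * p, hp.1, ?_⟩⟩ <;> simp only [mulBy_apply] <;> ring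
  · rintro _ ⟨⟨u, hu, rfl⟩, ⟨v, hv, h⟩⟩
    simp only [mulBy_apply] at h
    have : (X 0 : S) ∣ v :=
      ((X_prime (R := K) (i := (0 : Fin 2))).dvd_or_dvd ⟨u, h⟩).resolve_left not_X0_dvd_X1
    obtain ⟨p, rfl⟩ := this
    have hu' : u = X 1 * p := by
      apply mul_left_cancel₀ (X_ne_zero (R := K) (0 : Fin 2))
      rw [← h]; ring
    subst hu'
    refine ⟨p, ⟨hv, hu⟩, ?_⟩
    simp only [mulBy_apply]; ring

lemma finrank_up {d : ℕ} {V : Submodule K S} (hV : V ≤ H d) :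
    Module.finrank K (up V) + Module.finrank K (down V) = 2 * Module.finrank K V := by
  have := finite_of_le hV
  have h := Submodule.finrank_sup_add_finrank_inf_eq (V.map (mulBy (X 0))) (V.map (mulBy (X 1)))
  rw [← map_down, finrank_mulBy (mul_ne_zero (X_ne_zero _) (X_ne_zero _)),
    finrank_mulBy (X_ne_zero _), finrank_mulBy (X_ne_zero _)] at h
  rw [up, h]; ring

lemma H_eq (d : ℕ) : H d = restrictSupport K {m : Fin 2 →₀ ℕ | m 0 + m 1 = d ∧ True} := by
  ext p
  rw [mem_homogeneousSubmodule, mem_restrictSupport_iff]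
  simp [IsHomogeneous, IsWeightedHomogeneous, Set.subset_def, Finsupp.weight_apply,
    Finsupp.sum_fintype]

lemma up_H (e : ℕ) : up (H e) = H (e + 1) := by
  apply le_antisymm (up_homog le_rfl)
  rw [H_eq (e + 1), restrictSupport_eq_span, Submodule.span_le]
  rintro _ ⟨m, ⟨hm, -⟩, rfl⟩
  have hh : ∀ i : Fin 2, 1 ≤ m i → ∃ p ∈ H e, mulBy (X i) p = monomial m 1 := by
    intro i hi
    have hmi : Finsupp.single i 1 + (m - Finsupp.single i 1) = m :=
      add_tsub_cancel_of_le (Finsupp.single_le_iff.2 hi)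
    have h : mulBy (X i) (monomial (m - Finsupp.single i 1) (1 : K)) = monomial m 1 := by
      rw [mulBy_apply, X, monomial_mul, hmi, one_mul]
    refine ⟨_, ?_, h⟩
    refine homog_of_X_mul i ?_
    rw [← mulBy_apply, h]
    apply isHomogeneous_monomial
    simp [Finsupp.degree_eq_sum, hm]
  by_cases h0 : 1 ≤ m 0
  · exact Submodule.mem_sup_left (hh 0 h0)
  · exact Submodule.mem_sup_right (hh 1 (by omega))

lemma up_map (g : S) (V : Submodule K S) : up (V.map (mulBy g)) = (up V).map (mulBy g) := by
  have : ∀ h : S, (V.map (mulBy g)).map (mulBy h) = (V.map (mulBy h)).map (mulBy g) := by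
    intro h
    rw [← Submodule.map_comp, ← Submodule.map_comp]
    congr 1
    refine LinearMap.ext fun p => ?_
    simp only [LinearMap.comp_apply, mulBy_apply]; ring
  rw [up, up, Submodule.map_sup, this, this]

lemma one_dim {V : Submodule K S} (h : Module.finrank K V = 1) :
    ∃ (g : S) (e : ℕ), V = (H e).map (mulBy g) := by
  obtain ⟨⟨g, hg⟩, h0, hv⟩ := finrank_eq_one_iff'.1 h
  refine ⟨g, 0, le_antisymm ?_ ?_⟩
  · intro p hp
    obtain ⟨c, hc⟩ := hv ⟨p, hp⟩
    refine ⟨C c, isHomogeneous_C _ c, ?_⟩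
    have := congrArg Subtype.val hc
    simp only [SetLike.mk_smul_mk] at this
    rw [← this, mulBy_apply, smul_eq_C_mul, mul_comm]
  · rintro _ ⟨p, hp, rfl⟩
    have : p.IsHomogeneous 0 := hp
    rw [← totalDegree_zero_iff_isHomogeneous, totalDegree_eq_zero_iff_eq_C] at this
    rw [this, mulBy_apply, mul_comm, ← smul_eq_C_mul]
    exact V.smul_mem _ hg

lemma key (d : ℕ) : ∀ V : Submodule K S, V ≤ H d → V ≠ ⊥ →
    Module.finrank K V + 1 ≤ Module.finrank K (up V) ∧
    (Module.finrank K (up V) = Module.finrank K V + 1 →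
      ∃ (g : S) (e : ℕ), V = (H e).map (mulBy g)) := by
  induction d with
  | zero =>
    intro V hV h0
    have := finite_of_le hV
    have h1 := finrank_up hV
    rw [down_zero hV, finrank_bot] at h1
    have h2 : 0 < Module.finrank K V := finrank_pos_of_ne_bot h0
    exact ⟨by omega, fun h => one_dim (by omega)⟩
  | succ d ih =>
    intro V hV h0
    have := finite_of_le hV
    have h1 := finrank_up hV
    have h2 : 0 < Module.finrank K V := finrank_pos_of_ne_bot h0
    by_cases hd : down V = ⊥
    · rw [hd, finrank_bot] at h1
      exact ⟨by omega, fun h => one_dim (by omega)⟩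
    · obtain ⟨h3, h4⟩ := ih _ (down_homog hV) hd
      have h5 := Submodule.finrank_mono (up_down_le V)
      refine ⟨by omega, fun h => ?_⟩
      obtain ⟨g, e, hge⟩ := h4 (by omega)
      refine ⟨g, e + 1, ?_⟩
      rw [← up_H, ← up_map, ← hge]
      exact (Submodule.eq_of_le_of_finrank_le (up_down_le V) (by omega)).symm

lemma key' {d : ℕ} {V W : Submodule K S} (hV : V ≤ H d) (hW : W ≤ H (d + 1)) (hVW : up V ≤ W)
    (hW0 : W ≠ ⊥) (h : Module.finrank K W ≤ Module.finrank K V + 1) :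
    ∃ (g : S) (e : ℕ), W = (H e).map (mulBy g) := by
  have := finite_of_le hW
  by_cases h0 : V = ⊥
  · subst h0
    rw [finrank_bot] at h
    have h2 : 0 < Module.finrank K W := finrank_pos_of_ne_bot hW0
    exact one_dim (by omega)
  · obtain ⟨h3, h4⟩ := key d V hV h0
    have h5 := Submodule.finrank_mono hVW
    obtain ⟨g, e, hge⟩ := h4 (by omega)
    refine ⟨g, e + 1, ?_⟩
    rw [← up_H, ← up_map, ← hge]
    exact (Submodule.eq_of_le_of_finrank_le hVW (by omega)).symm

lemma dvd_of_X_pow {g f : S} {k : ℕ} (h0 : g ∣ f * X 0 ^ k) (h1 : g ∣ f * X 1 ^ k) (hf : f ≠ 0) :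
    g ∣ f := by
  obtain ⟨u, hu⟩ := h0
  obtain ⟨v, hv⟩ := h1
  have hg : g ≠ 0 := by
    rintro rfl
    rw [zero_mul] at hu
    exact mul_ne_zero hf (pow_ne_zero _ (X_ne_zero _)) hu
  have h : u * X 1 ^ k = X 0 ^ k * v := by
    apply mul_left_cancel₀ hg
    calc g * (u * X 1 ^ k) = (g * u) * X 1 ^ k := by ring
      _ = (f * X 1 ^ k) * X 0 ^ k := by rw [← hu]; ring
      _ = _ := by rw [hv]; ring
  have h2 : (X 0 : S) ^ k ∣ u := by
    refine (X_prime (R := K) (i := (0 : Fin 2))).pow_dvd_of_dvd_mul_right k ?_ ⟨v, h⟩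
    intro h3
    exact not_X0_dvd_X1 ((X_prime (R := K) (i := (0 : Fin 2))).dvd_of_dvd_pow h3)
  obtain ⟨w, rfl⟩ := h2
  refine ⟨w, mul_right_cancel₀ (pow_ne_zero k (X_ne_zero (R := K) (0 : Fin 2))) ?_⟩
  rw [hu]; ring

/-- degree piece -/
noncomputable def pc (I : Ideal (MvPolynomial (Fin 2) K)) (d : ℕ) :
    Submodule K (MvPolynomial (Fin 2) K) :=
  Submodule.restrictScalars K I ⊓ homogeneousSubmodule (Fin 2) K d

lemma up_pc (I : Ideal S) (d : ℕ) : up (pc I d) ≤ pc I (d + 1) := by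
  rw [up_le_iff]
  intro p hp
  have h : ∀ i, X i * p ∈ up (pc I d) := by
    intro i
    fin_cases i
    · exact Submodule.mem_sup_left ⟨p, hp, rfl⟩
    · exact Submodule.mem_sup_right ⟨p, hp, rfl⟩
  have h2 := up_homog (V := pc I d) inf_le_right
  exact ⟨⟨I.mul_mem_left _ hp.1, h2 (h 0)⟩, ⟨I.mul_mem_left _ hp.1, h2 (h 1)⟩⟩

lemma pc_full {I : Ideal S} {f₀ f₁ : S} {a₀ a₁ d : ℕ} (h0 : f₀ ≠ 0) (h1 : f₁ ≠ 0)
    (hreg : ∀ g : S, f₁ * g ∈ Ideal.span {f₀} → g ∈ Ideal.span {f₀})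
    (hf₀ : f₀.IsHomogeneous a₀) (hf₁ : f₁.IsHomogeneous a₁) (hI0 : f₀ ∈ I) (hI1 : f₁ ∈ I)
    (ha : a₀ ≤ d + 1) (hb : a₁ ≤ d + 1)
    (h : Module.finrank K (pc I (d + 1)) ≤ Module.finrank K (pc I d) + 1) :
    pc I (d + 1) = H (d + 1) := by
  have hmem : ∀ (f : S) (a : ℕ), f.IsHomogeneous a → f ∈ I → a ≤ d + 1 → ∀ i : Fin 2,
      f * X i ^ (d + 1 - a) ∈ pc I (d + 1) := by
    intro f a hf hI had i
    refine ⟨I.mul_mem_right _ hI, ?_⟩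
    have := hf.mul (isHomogeneous_X_pow (R := K) i (d + 1 - a))
    rwa [show a + (d + 1 - a) = d + 1 by omega] at this
  have hne : f₀ * X 0 ^ (d + 1 - a₀) ≠ 0 := mul_ne_zero h0 (pow_ne_zero _ (X_ne_zero _))
  have hbot : pc I (d + 1) ≠ ⊥ := by
    intro hb
    have := hmem f₀ a₀ hf₀ hI0 ha 0
    rw [hb, Submodule.mem_bot] at this
    exact hne this
  obtain ⟨g, e, hge⟩ := key' (V := pc I d) (W := pc I (d + 1)) inf_le_right inf_le_right
    (up_pc I d) hbot h
  have hdvd : ∀ p ∈ pc I (d + 1), g ∣ p := by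
    intro p hp
    rw [hge] at hp
    obtain ⟨q, -, rfl⟩ := hp
    exact ⟨q, rfl⟩
  have hg0 : g ∣ f₀ := dvd_of_X_pow (hdvd _ (hmem f₀ a₀ hf₀ hI0 ha 0))
    (hdvd _ (hmem f₀ a₀ hf₀ hI0 ha 1)) h0
  have hg1 : g ∣ f₁ := dvd_of_X_pow (hdvd _ (hmem f₁ a₁ hf₁ hI1 hb 0))
    (hdvd _ (hmem f₁ a₁ hf₁ hI1 hb 1)) h1
  have hunit : IsUnit g := by
    obtain ⟨u, hu⟩ := hg0
    obtain ⟨v, hv⟩ := hg1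
    have := hreg u (Ideal.mem_span_singleton.2 ⟨v, by rw [hv, hu]; ring⟩)
    obtain ⟨w, hw⟩ := Ideal.mem_span_singleton.1 this
    have hu0 : u ≠ 0 := by
      rintro rfl
      exact h0 (by rw [hu, mul_zero])
    refine IsUnit.of_mul_eq_one w (mul_left_cancel₀ hu0 ?_)
    rw [mul_one]
    nth_rewrite 2 [hw]
    rw [hu]; ring
  obtain ⟨c, hc, rfl⟩ := MvPolynomial.isUnit_iff_eq_C_of_isReduced.1 hunit
  have hee : pc I (d + 1) = H e := by
    rw [hge]
    apply le_antisymm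
    · rintro _ ⟨p, hp, rfl⟩
      rw [mulBy_apply, ← smul_eq_C_mul]
      exact (H e).smul_mem _ hp
    · intro p hp
      refine ⟨c⁻¹ • p, (H e).smul_mem _ hp, ?_⟩
      rw [mulBy_apply, ← smul_eq_C_mul, smul_smul, mul_inv_cancel₀ hc.ne_zero, one_smul]
  have hm := hmem f₀ a₀ hf₀ hI0 ha 0
  have hm1 : f₀ * X 0 ^ (d + 1 - a₀) ∈ H (d + 1) := hm.2
  rw [hee] at hm
  have : e = d + 1 := IsHomogeneous.inj_right hm hm1 hne
  rw [hee, this]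

lemma finrank_support (d : ℕ) (P : ℕ → Prop) [DecidablePred P] :
    Module.finrank K (restrictSupport K {m : Fin 2 →₀ ℕ | m 0 + m 1 = d ∧ P (m 0)}) =
      ((Finset.range (d + 1)).filter P).card := by
  rw [Module.finrank_eq_nat_card_basis (basisRestrictSupport K _)]
  have : {m : Fin 2 →₀ ℕ | m 0 + m 1 = d ∧ P (m 0)} =
      (fun i : ℕ => Finsupp.equivFunOnFinite.symm ![i, d - i]) ''
        ((Finset.range (d + 1)).filter P : Finset ℕ) := by
    ext m
    simp only [Set.mem_ofPred_eq, Set.mem_image, Finset.coe_filter, Finset.mem_range]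
    constructor
    · rintro ⟨h, hp⟩
      refine ⟨m 0, ⟨by omega, hp⟩, ?_⟩
      ext i
      fin_cases i
      · simp
      · simp; omega
    · rintro ⟨i, ⟨h, hp⟩, rfl⟩
      simp [hp]; omega
  rw [this, Nat.card_coe_set_eq, Set.ncard_image_of_injective, Set.ncard_coe_finset]
  intro i j h
  have := DFunLike.congr_fun h 0
  simpa using this

lemma finrank_H (d : ℕ) : Module.finrank K (H d) = d + 1 := by
  rw [H_eq, finrank_support d (fun _ => True)]; simp

lemma pc_support (d : ℕ) (U : Set (Fin 2 →₀ ℕ)) (hU : IsUpperSet U) (P : ℕ → Prop)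
    (hP : ∀ m : Fin 2 →₀ ℕ, m 0 + m 1 = d → (m ∈ U ↔ P (m 0))) :
    pc (restrictSupportIdeal K U hU) d =
      restrictSupport K {m : Fin 2 →₀ ℕ | m 0 + m 1 = d ∧ P (m 0)} := by
  rw [pc, restrictScalars_restrictSupportIdeal, H_eq]
  ext p
  rw [Submodule.mem_inf]
  simp only [mem_restrictSupport_iff, Set.subset_def, Set.mem_ofPred_eq]
  constructor
  · rintro ⟨h1, h2⟩ m hm
    exact ⟨(h2 m hm).1, (hP m (h2 m hm).1).1 (h1 m hm)⟩
  · intro h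
    exact ⟨fun m hm => (hP m (h m hm).1).2 (h m hm).2, fun m hm => ⟨(h m hm).1, trivial⟩⟩

lemma upper_of_step {U : ℕ → ℕ → Prop} (h0 : ∀ i j, U i j → U (i + 1) j)
    (h1 : ∀ i j, U i j → U i (j + 1)) : IsUpperSet {m : Fin 2 →₀ ℕ | U (m 0) (m 1)} := by
  intro m m' h hm
  have a : U (m' 0) (m 1) := Nat.le_induction (P := fun n _ => U n (m 1)) hm
    (fun n _ hn => h0 _ _ hn) (m' 0) (h 0)
  exact Nat.le_induction (P := fun n _ => U (m' 0) n) a (fun n _ hn => h1 _ _ hn) (m' 1) (h 1)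

end helpers

/-- the Eisenbud–Green–Harris conjecture holds for `n = 2`. -/
theorem stmt12 {K : Type} [Field K] [Infinite K] (a : Fin 2 → ℕ)
    (ha2 : ∀ i, 2 ≤ a i) (hmono : Monotone a) :
    EGHnr K 2 2 le_rfl a := by
  rintro I - ⟨f, ⟨-, hreg⟩, hhom, hI⟩
  have ha01 : a 0 ≤ a 1 := hmono (by decide)
  have ha0 := ha2 0
  have hf0 : f 0 ≠ 0 := by
    intro h
    have := hreg 0 1 (by simp [h])
    simp at this
  have hs : f '' {j : Fin 2 | j < 1} = {f 0} := by
    have : {j : Fin 2 | j < 1} = {0} := by ext j; fin_cases j <;> simp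
    rw [this, Set.image_singleton]
  have hreg1 := hreg 1
  rw [hs] at hreg1
  have hpos : f 0 ∈ pc I (a 0) := ⟨hI 0, hhom 0⟩
  have hf1 : f 1 ≠ 0 := by
    intro h
    have := hreg1 1 (by simp [h])
    rw [Ideal.mem_span_singleton] at this
    obtain ⟨c, hc⟩ := MvPolynomial.isUnit_iff_eq_C_of_isReduced.1 (isUnit_of_dvd_one this)
    have h2 := hhom 0
    rw [hc.2] at h2
    have := IsHomogeneous.inj_right h2 (isHomogeneous_C _ c) (by simpa using hc.1.ne_zero)
    omega
  have hfin : ∀ d, Module.Finite K (pc I d) := fun d => finite_of_le inf_le_right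
  have hle : ∀ d, Module.finrank K (pc I d) ≤ d + 1 := by
    intro d
    have : Module.Finite K (homogeneousSubmodule (Fin 2) K d) := finite_of_le le_rfl
    rw [← finrank_H (K := K) d]
    exact Submodule.finrank_mono inf_le_right
  obtain ⟨q, hq⟩ : ∃ q : ℕ → ℕ, ∀ d, q d + Module.finrank K (pc I d) = d + 1 :=
    ⟨fun d => d + 1 - Module.finrank K (pc I d), fun d => by have := hle d; simp only; omega⟩
  have hA : ∀ d, q d ≤ d → q (d + 1) ≤ q d := by
    intro d hd
    have h1 := hq d
    have h2 := hq (d + 1)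
    have h0 : pc I d ≠ ⊥ := by
      intro h
      rw [h, finrank_bot] at h1
      omega
    have h3 := (key d (pc I d) inf_le_right h0).1
    have h4 := Submodule.finrank_mono (up_pc I d)
    omega
  have hB : ∀ d, a 1 ≤ d + 1 → q (d + 1) + 1 ≤ q d ∨ q (d + 1) = 0 := by
    intro d hd
    have h1 := hq d
    have h2 := hq (d + 1)
    by_cases h : Module.finrank K (pc I (d + 1)) ≤ Module.finrank K (pc I d) + 1
    · have := pc_full hf0 hf1 hreg1 (hhom 0) (hhom 1) (hI 0) (hI 1) (by omega) hd h
      rw [this, finrank_H] at h2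
      right; omega
    · left; omega
  have hC : q (a 0) ≤ a 0 := by
    have h1 := hq (a 0)
    have h0 : pc I (a 0) ≠ ⊥ := by
      intro h
      have := hpos
      rw [h, Submodule.mem_bot] at this
      exact hf0 this
    have h2 : 0 < Module.finrank K (pc I (a 0)) := finrank_pos_of_ne_bot h0
    omega
  have hT : ∀ d, (d + 1 - a 1) + q d ≤ d + 1 := by
    intro d
    induction d with
    | zero => have := hq 0; omega
    | succ d ih =>
      have := hq (d + 1)
      by_cases h : a 1 ≤ d + 1
      · have := hB d h; omega
      · omega
  have hU : IsUpperSet {m : Fin 2 →₀ ℕ |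
      a 1 ≤ m 1 ∨ (m 0 + m 1 + 1 - a 1) + q (m 0 + m 1) ≤ m 0} := by
    refine upper_of_step (U := fun i j => a 1 ≤ j ∨ (i + j + 1 - a 1) + q (i + j) ≤ i) ?_ ?_
    · intro i j h
      have h1 := hA (i + j)
      have h2 := hB (i + j)
      rw [show i + 1 + j = i + j + 1 by ring]
      omega
    · intro i j h
      have h1 := hA (i + j)
      have h2 := hB (i + j)
      rw [show i + (j + 1) = i + j + 1 by ring]
      omega
  refine ⟨restrictSupportIdeal K _ hU, ?_, ?_⟩
  · intro i
    change X i ^ a i ∈ (restrictSupportIdeal K _ hU).restrictScalars K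
    rw [restrictScalars_restrictSupportIdeal, X_pow_eq_monomial, monomial_mem_restrictSupport]
    left
    fin_cases i
    · have := hB (a 0 - 1)
      rw [show a 0 - 1 + 1 = a 0 by omega] at this
      have := hq (a 0 - 1)
      simp
      omega
    · simp
  · intro d
    have hh : ∀ J : Ideal (MvPolynomial (Fin 2) K), hilb J d = Module.finrank K (pc J d) :=
      fun _ => rfl
    rw [hh, hh]
    rw [pc_support d _ hU (fun i => ¬ ((d + 1 - a 1) ≤ i ∧ i < (d + 1 - a 1) + q d)),
      finrank_support d (fun i => ¬ ((d + 1 - a 1) ≤ i ∧ i < (d + 1 - a 1) + q d))]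
    · have h1 : (Finset.range (d + 1)).filter
          (fun i => ¬ ((d + 1 - a 1) ≤ i ∧ i < (d + 1 - a 1) + q d)) =
          Finset.range (d + 1) \ Finset.Ico (d + 1 - a 1) ((d + 1 - a 1) + q d) := by
        ext i; simp
      have h2 := hT d
      have h3 := hq d
      rw [h1, Finset.card_sdiff_of_subset]
      · simp; omega
      · intro i; simp; omega
    · intro m hm
      simp only [Set.mem_ofPred_eq, hm]
      have := hT d
      omega
end
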